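/- arXiv:2405.04709 — 8 statements merged into one kernel-verified Lean document; each statement's English description precedes it below -/
import Mathlib

section
/- Let R be a ring and X a chain complex of left R-modules with a filtration (F^p)_{p∈ℤ}. Then for every r ≥ 1 and all p, q ∈ ℤ, one has I^r_{p,q} ∩ (∂_{p+q})^{−1}(J^r_{p−r,q+r−1} + I^{r−1}_{p−r−1,q+r}) = I^{r+1}_{p,q} + I^{r−1}_{p−1,q+1}; that is, the set of x ∈ I^r_{p,q} with ∂_{p+q}(x) ∈ J^r_{p−r,q+r−1} + I^{r−1}_{p−r−1,q+r} is exactly I^{r+1}_{p,q} + I^{r−1}_{p−1,q+1}. -/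
open Submodule

variable {R : Type*} [Ring R]

section FiltrationSetup

variable (X : ℤ → Type*) [∀ n, AddCommGroup (X n)] [∀ n, Module R (X n)]

/-- The submodule `I^r_{p,q}` of `X_n` (where `n = p + q`):
`I^r_{p,q} = (∂_n)⁻¹(F^{p−r}_{n−1}) ∩ F^p_n`. -/
def filtI (d : ∀ i j : ℤ, X i →ₗ[R] X j) (F : ℤ → ∀ n : ℤ, Submodule R (X n))
    (r p n : ℤ) : Submodule R (X n) :=
  Submodule.comap (d n (n - 1)) (F (p - r) (n - 1)) ⊓ F p n

/-- The submodule `J^r_{p,q}` of `X_n` (where `n = p + q`):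
`J^r_{p,q} = ∂_{n+1}(F^{p+r−1}_{n+1}) ∩ F^p_n`. -/
def filtJ (d : ∀ i j : ℤ, X i →ₗ[R] X j) (F : ℤ → ∀ n : ℤ, Submodule R (X n))
    (r p n : ℤ) : Submodule R (X n) :=
  Submodule.map (d (n + 1) n) (F (p + r - 1) (n + 1)) ⊓ F p n

end FiltrationSetup

/-!
Everything is a computation in the modular lattice of submodules of `Xₙ`. Since `J^r_{p−r}` is the
image of `I^{r−1}_{p−1}` under `∂ₙ`, pulling `J^r_{p−r} + N` back along `∂ₙ` gives
`I^{r−1}_{p−1} + ∂ₙ⁻¹(N)`. For `N = I^{r−1}_{p−r−1}` the preimage is just `∂ₙ⁻¹(F^{p−r−1})` because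
`∂ ∘ ∂ = 0`, and as `I^{r−1}_{p−1} ⊆ I^r_p`, the modular law moves the intersection with `I^r_p`
onto this second summand, where it becomes `I^{r+1}_p`.
-/

theorem comap_map_sup_eq_sup_comap {A B M N : Type*} [Semiring A] [Semiring B] {σ : A →+* B}
    [RingHomSurjective σ] [AddCommGroup M] [AddCommGroup N] [Module A M] [Module B N]
    (f : M →ₛₗ[σ] N) (S : Submodule A M) (T : Submodule B N) :
    comap f (map f S ⊔ T) = S ⊔ comap f T := by
  have map_sup_comap : map f (S ⊔ comap f T) ⊔ T = map f S ⊔ T := by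
    rw [Submodule.map_sup, sup_assoc, sup_eq_right.mpr (map_comap_le f T)]
  rw [← map_sup_comap, comap_map_sup_of_comap_le le_sup_right]

section FiltrationLemmas

variable (X : ℤ → Type*) [∀ n, AddCommGroup (X n)] [∀ n, Module R (X n)]
  (d : ∀ i j : ℤ, X i →ₗ[R] X j) (F : ℤ → ∀ n : ℤ, Submodule R (X n)) (r p n : ℤ)

theorem filtJ_sub_one :
    filtJ X d F r p (n - 1) = map (d n (n - 1)) (F (p + r - 1) n) ⊓ F p (n - 1) := by
  -- `X (n - 1 + 1)` and `X n` are not definitionally equal: replace `n - 1 + 1` by a variable `m`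
  -- so that `m = n` can be substituted.
  have map_congr_degree (m : ℤ) (hm : m = n) :
      map (d m (n - 1)) (F (p + r - 1) m) = map (d n (n - 1)) (F (p + r - 1) n) := by
    subst hm
    rfl
  rw [filtJ, map_congr_degree _ (sub_add_cancel n 1)]

theorem filtJ_sub_one_eq_map_filtI :
    filtJ X d F r p (n - 1) = map (d n (n - 1)) (filtI X d F (r - 1) (p + r - 1) n) := by
  have hp : p + r - 1 - (r - 1) = p := by ring
  rw [filtJ_sub_one, map_inf_eq_map_inf_comap, filtI, hp, inf_comm]

variable {X d F}

theorem comap_filtI_sub_one (hdd : d (n - 1) (n - 1 - 1) ∘ₗ d n (n - 1) = 0) :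
    comap (d n (n - 1)) (filtI X d F r p (n - 1)) = comap (d n (n - 1)) (F p (n - 1)) := by
  rw [filtI, comap_inf, ← comap_comp, hdd, comap_zero, top_inf_eq]

theorem filtI_sub_one_sub_one_le (hF : F (p - 1) n ≤ F p n) :
    filtI X d F (r - 1) (p - 1) n ≤ filtI X d F r p n := by
  rw [filtI, filtI, sub_sub_sub_cancel_right]
  exact inf_le_inf_left _ hF

theorem filtI_inf_comap (hF : F (p - r - 1) (n - 1) ≤ F (p - r) (n - 1)) :
    filtI X d F r p n ⊓ comap (d n (n - 1)) (F (p - r - 1) (n - 1)) = filtI X d F (r + 1) p n := by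
  rw [filtI, filtI, ← sub_sub p r 1, inf_right_comm, ← comap_inf, inf_eq_right.mpr hF]

theorem filtI_inter_preimage_eq_general (hdd : ∀ n : ℤ, d (n - 1) (n - 1 - 1) ∘ₗ d n (n - 1) = 0)
    (hmono : ∀ p n : ℤ, F (p - 1) n ≤ F p n) :
    filtI X d F r p n ⊓ comap (d n (n - 1))
        (filtJ X d F r (p - r) (n - 1) ⊔ filtI X d F (r - 1) (p - r - 1) (n - 1))
      = filtI X d F (r + 1) p n ⊔ filtI X d F (r - 1) (p - 1) n := by
  have comap_filtJ_sup_filtI : comap (d n (n - 1))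
        (filtJ X d F r (p - r) (n - 1) ⊔ filtI X d F (r - 1) (p - r - 1) (n - 1))
      = filtI X d F (r - 1) (p - 1) n ⊔ comap (d n (n - 1)) (F (p - r - 1) (n - 1)) := by
    rw [filtJ_sub_one_eq_map_filtI, comap_map_sup_eq_sup_comap, comap_filtI_sub_one _ _ _ (hdd n),
      sub_add_cancel]
  calc
    _ = (filtI X d F (r - 1) (p - 1) n ⊔ comap (d n (n - 1)) (F (p - r - 1) (n - 1)))
          ⊓ filtI X d F r p n := by rw [comap_filtJ_sup_filtI, inf_comm]
    _ = filtI X d F (r - 1) (p - 1) n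
          ⊔ comap (d n (n - 1)) (F (p - r - 1) (n - 1)) ⊓ filtI X d F r p n :=
      sup_inf_assoc_of_le _ (filtI_sub_one_sub_one_le r p n (hmono p n))
    _ = filtI X d F (r + 1) p n ⊔ filtI X d F (r - 1) (p - 1) n := by
      rw [inf_comm, filtI_inf_comap r p n (hmono (p - r) (n - 1)), sup_comm]

end FiltrationLemmas

/-- Let `R` be a ring and `X` a chain complex of left `R`-modules with a
filtration `(F p)ₚ` by subcomplexes.  Then for every `r ≥ 1` and all `p q : ℤ`,
`I^r_{p,q} ∩ (∂_{p+q})⁻¹(J^r_{p−r,q+r−1} + I^{r−1}_{p−r−1,q+r}) = I^{r+1}_{p,q} + I^{r−1}_{p−1,q+1}`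
as submodules of `X_{p+q}`.  (The terms `J^r_{p−r,q+r−1}` and `I^{r−1}_{p−r−1,q+r}` live in
degree `p+q−1`, and `I^{r−1}_{p−1,q+1}` in degree `p+q`.) -/
theorem filtI_inter_preimage_eq
    (X : ℤ → Type*) [∀ n, AddCommGroup (X n)] [∀ n, Module R (X n)]
    (d : ∀ i j : ℤ, X i →ₗ[R] X j)
    (hshape : ∀ i j : ℤ, j ≠ i - 1 → d i j = 0)
    (hdd : ∀ i j k : ℤ, ∀ x : X i, d j k (d i j x) = 0)
    (F : ℤ → ∀ n : ℤ, Submodule R (X n))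
    (hmono : ∀ p n : ℤ, F (p - 1) n ≤ F p n)
    (hsub : ∀ p i j : ℤ, ∀ x : X i, x ∈ F p i → d i j x ∈ F p j)
    (r : ℤ) (hr : 1 ≤ r) (p q : ℤ) :
    filtI X d F r p (p + q) ⊓
        Submodule.comap (d (p + q) (p + q - 1))
          (filtJ X d F r (p - r) (p + q - 1) ⊔ filtI X d F (r - 1) (p - r - 1) (p + q - 1))
      = filtI X d F (r + 1) p (p + q) ⊔ filtI X d F (r - 1) (p - 1) (p + q) := by
  exact filtI_inter_preimage_eq_general r p (p + q) (fun n ↦ LinearMap.ext (hdd _ _ _)) hmono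
end

section
/- Let R be a ring and X a chain complex of left R-modules with a filtration (F^p)_{p∈ℤ}. Then for all p, q ∈ ℤ there is an isomorphism of R-modules H_{p+q}(F^p/F^{p−1}) ≅ I^1_{p,q}/(J^1_{p,q} + F^{p−1}_{p+q}), where F^p/F^{p−1} is the quotient chain complex; here J^1_{p,q} + F^{p−1}_{p+q} ⊆ I^1_{p,q}, so the right-hand quotient is well defined. -/
open Submodule

variable {R : Type*} [Ring R]

section FiltrationSetup

variable (X : ℤ → Type*) [∀ n, AddCommGroup (X n)] [∀ n, Module R (X n)]

/-- The `m`-th homology of a ℤ-indexed complex `(Y, e)` (with the homological-complex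
convention `e i j : Y i →ₗ Y j`, nonzero only for `j = i − 1`):
`H_m = Ker(e m (m−1)) / Im(e (m+1) m)`. -/
abbrev homologyAt (Y : ℤ → Type*) [∀ n, AddCommGroup (Y n)] [∀ n, Module R (Y n)]
    (e : ∀ i j : ℤ, Y i →ₗ[R] Y j) (m : ℤ) :=
  ↥(LinearMap.ker (e m (m - 1))) ⧸
    Submodule.comap (LinearMap.ker (e m (m - 1))).subtype (LinearMap.range (e (m + 1) m))

/-- The degree-`n` term of the quotient complex `F^p/F^{p−1}`. -/
abbrev quotComplexX (F : ℤ → ∀ n : ℤ, Submodule R (X n)) (p n : ℤ) :=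
  ↥(F p n) ⧸ Submodule.comap (F p n).subtype (F (p - 1) n)

/-- The differentials of the quotient complex `F^p/F^{p−1}`, induced by those of `X`. -/
def quotComplexD (d : ∀ i j : ℤ, X i →ₗ[R] X j) (F : ℤ → ∀ n : ℤ, Submodule R (X n))
    (hsub : ∀ p i j : ℤ, ∀ x : X i, x ∈ F p i → d i j x ∈ F p j) (p : ℤ)
    (i j : ℤ) : quotComplexX X F p i →ₗ[R] quotComplexX X F p j :=
  Submodule.mapQ _ _ ((d i j).restrict (fun x hx => hsub p i j x hx))
    (fun x hx => hsub (p - 1) i j x hx)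

end FiltrationSetup

/-!
The kernel and the image of a map `N₁ / P₁ → N₂ / P₂` of subquotients induced by `f` can be computed
upstairs: the class of `x` is killed iff `f x ∈ P₂`, and it is hit iff `x ∈ f(N₁) + P₂`. Hence `I¹`
consists of the representatives in `F^p` of the cycles of `F^p/F^{p−1}`, and those representing
boundaries form `∂(F^p) + F^{p−1}`, where `∂(F^p) = J¹` because `F^p` is stable under `∂`.
-/

section Subquotient

variable {M₁ M₂ M₃ : Type*} [AddCommGroup M₁] [AddCommGroup M₂] [AddCommGroup M₃]
  [Module R M₁] [Module R M₂] [Module R M₃]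

/-- The isomorphism `M₁ / φ⁻¹(B) ≃ M₂ / B` induced by a surjective linear map `φ : M₁ → M₂`. -/
noncomputable def quotComapEquivOfSurjective (φ : M₁ →ₗ[R] M₂) (hφ : Function.Surjective φ)
    (B : Submodule R M₂) : (M₁ ⧸ B.comap φ) ≃ₗ[R] M₂ ⧸ B :=
  (quotEquivOfEq _ _ (by rw [LinearMap.ker_comp, ker_mkQ])).trans
    ((B.mkQ ∘ₗ φ).quotKerEquivOfSurjective (B.mkQ_surjective.comp hφ))

variable {N₁ P₁ : Submodule R M₁} {N₂ P₂ : Submodule R M₂} {N₃ P₃ : Submodule R M₃}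
  (f : M₁ →ₗ[R] M₂) (hfN : ∀ x ∈ N₁, f x ∈ N₂) (hfP : ∀ x ∈ P₁, f x ∈ P₂)
  (g : M₂ →ₗ[R] M₃) (hgN : ∀ x ∈ N₂, g x ∈ N₃) (hgP : ∀ x ∈ P₂, g x ∈ P₃)

/-- The map of subquotients `N₁ / P₁ → N₂ / P₂` induced by `f`, where `N / P` is encoded as the
quotient of `N` by the preimage of `P` in `N`, that is, as `N / (N ∩ P)`. -/
def subquotientMap : (N₁ ⧸ P₁.comap N₁.subtype) →ₗ[R] N₂ ⧸ P₂.comap N₂.subtype :=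
  mapQ _ _ (f.restrict hfN) fun x hx => hfP x hx

theorem mk_mem_ker_subquotientMap (x : N₁) :
    Submodule.Quotient.mk x ∈ LinearMap.ker (subquotientMap f hfN hfP) ↔ f x ∈ P₂ :=
  Submodule.Quotient.mk_eq_zero _

theorem mk_mem_range_subquotientMap (x : N₂) :
    Submodule.Quotient.mk x ∈ LinearMap.range (subquotientMap f hfN hfP) ↔
      (x : M₂) ∈ N₁.map f ⊔ P₂ := by
  have mk_eq_iff (z : N₁) :
      subquotientMap f hfN hfP (Submodule.Quotient.mk z) = Submodule.Quotient.mk x ↔ f z - x ∈ P₂ :=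
    Submodule.Quotient.eq _
  rw [mem_sup]
  constructor
  · rintro ⟨y, hy⟩
    obtain ⟨z, rfl⟩ := Submodule.Quotient.mk_surjective _ y
    have hz : x - f z ∈ P₂ := sub_mem_comm_iff.mp ((mk_eq_iff z).mp hy)
    exact ⟨f z, mem_map_of_mem z.2, x - f z, hz, add_sub_cancel _ _⟩
  · rintro ⟨_, ⟨z, hz, rfl⟩, w, hw, hx⟩
    refine ⟨Submodule.Quotient.mk ⟨z, hz⟩, (mk_eq_iff ⟨z, hz⟩).mpr ?_⟩
    simpa [← hx] using hw

/-- The map sending an element of `N₁` with image in `P₂` to its class in the kernel of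
`N₁ / P₁ → N₂ / P₂`. -/
def toKerSubquotientMap : ↥(P₂.comap f ⊓ N₁) →ₗ[R] LinearMap.ker (subquotientMap f hfN hfP) :=
  (mkQ _ ∘ₗ inclusion inf_le_right).codRestrict _ fun x =>
    (mk_mem_ker_subquotientMap f hfN hfP (inclusion inf_le_right x)).mpr x.2.1

theorem toKerSubquotientMap_surjective :
    Function.Surjective (toKerSubquotientMap f hfN hfP) := by
  rintro ⟨y, hy⟩
  obtain ⟨x, rfl⟩ := Submodule.Quotient.mk_surjective _ y
  exact ⟨⟨x, (mk_mem_ker_subquotientMap f hfN hfP x).mp hy, x.2⟩, rfl⟩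

/-- The homology at `N₂ / P₂` of the maps `N₁ / P₁ → N₂ / P₂ → N₃ / P₃` induced by `f` and `g`,
as a subquotient of `M₂`. -/
noncomputable def subquotientHomologyEquiv :
    (LinearMap.ker (subquotientMap g hgN hgP) ⧸
        (LinearMap.range (subquotientMap f hfN hfP)).comap
          (LinearMap.ker (subquotientMap g hgN hgP)).subtype) ≃ₗ[R]
      ↥(P₃.comap g ⊓ N₂) ⧸ (N₁.map f ⊔ P₂).comap (P₃.comap g ⊓ N₂).subtype :=
  (quotComapEquivOfSurjective _ (toKerSubquotientMap_surjective g hgN hgP) _).symm.trans <|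
    quotEquivOfEq _ _ <| ext fun x =>
      mk_mem_range_subquotientMap f hfN hfP (inclusion inf_le_right x)

end Subquotient

theorem filtJ_one_eq_map {X : ℤ → Type*} [∀ n, AddCommGroup (X n)] [∀ n, Module R (X n)]
    (d : ∀ i j : ℤ, X i →ₗ[R] X j) (F : ℤ → ∀ n : ℤ, Submodule R (X n))
    (p n : ℤ) (hsub : ∀ x ∈ F p (n + 1), d (n + 1) n x ∈ F p n) :
    filtJ X d F 1 p n = (F p (n + 1)).map (d (n + 1) n) := by
  rw [filtJ, add_sub_cancel_right]
  exact inf_eq_left.mpr (map_le_iff_le_comap.mpr hsub)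

/-- Let `R` be a ring and `X` a chain complex of left `R`-modules with a
filtration `(F p)ₚ` by subcomplexes.  Then for all `p q : ℤ` there is an isomorphism of
`R`-modules `H_{p+q}(F^p/F^{p−1}) ≅ I¹_{p,q}/(J¹_{p,q} + F^{p−1}_{p+q})`. -/
theorem homology_quotient_filtration_iso
    (X : ℤ → Type*) [∀ n, AddCommGroup (X n)] [∀ n, Module R (X n)]
    (d : ∀ i j : ℤ, X i →ₗ[R] X j)
    (hshape : ∀ i j : ℤ, j ≠ i - 1 → d i j = 0)
    (hdd : ∀ i j k : ℤ, ∀ x : X i, d j k (d i j x) = 0)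
    (F : ℤ → ∀ n : ℤ, Submodule R (X n))
    (hmono : ∀ p n : ℤ, F (p - 1) n ≤ F p n)
    (hsub : ∀ p i j : ℤ, ∀ x : X i, x ∈ F p i → d i j x ∈ F p j)
    (p q : ℤ) :
    Nonempty
      (homologyAt (quotComplexX X F p) (quotComplexD X d F hsub p) (p + q) ≃ₗ[R]
        ↥(filtI X d F 1 p (p + q)) ⧸
          Submodule.comap (filtI X d F 1 p (p + q)).subtype
            (filtJ X d F 1 p (p + q) ⊔ F (p - 1) (p + q))) := by
  rw [filtJ_one_eq_map d F p (p + q) (hsub p _ _)]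
  -- `quotComplexD` and `filtI` unfold to `subquotientMap` and to the numerator of its homology.
  exact ⟨subquotientHomologyEquiv
    (d (p + q + 1) (p + q)) (hsub p _ _) (hsub (p - 1) _ _)
    (d (p + q) (p + q - 1)) (hsub p _ _) (hsub (p - 1) _ _)⟩
end

section
/- Let R be a commutative ring and (a_α)_{α∈Φ} a family of elements of R such that any finitely many pairwise distinct members of the family form a regular sequence on R in some order, and let 𝔞 be the ideal generated by the a_α. Then for every s ≥ 1 there is an isomorphism of R/𝔞-modules Sym^s_{R/𝔞}(𝔞/𝔞²) ≅ 𝔞^s/𝔞^{s+1} sending the product (a₁+𝔞²)·…·(a_s+𝔞²) to a₁⋯a_s + 𝔞^{s+1} for all a₁,…,a_s ∈ 𝔞. -/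
open scoped TensorProduct

/-- The `s`-th symmetric power of a `k`-module `M`: the quotient of the `s`-fold tensor power
`M^{⊗s}` by the submodule generated by all `x₁⊗…⊗xₛ − x_{τ(1)}⊗…⊗x_{τ(s)}` for
permutations `τ`. -/
abbrev SymPow (k : Type*) [CommRing k] (M : Type*) [AddCommGroup M] [Module k M]
    (s : ℕ) :=
  (⨂[k]^s M) ⧸ Submodule.span k
    {z : ⨂[k]^s M | ∃ (x : Fin s → M) (τ : Equiv.Perm (Fin s)),
      z = PiTensorProduct.tprod k x - PiTensorProduct.tprod k (x ∘ τ)}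

/-!
A homogeneous polynomial of degree `s` over `R/𝔞` in variables `X_α` can be read as an element of
`Symˢ(𝔞/𝔞²)`, by `X_α ↦ a_α + 𝔞²`, and composing with the product map to `𝔞ˢ/𝔞ˢ⁺¹` evaluates a
lift of it to `R` at `a`. Every element of `Symˢ(𝔞/𝔞²)` arises in this way, so the product map is
injective as soon as `F(a) ∈ 𝔞ˢ⁺¹` forces the coefficients of a homogeneous `F` of degree `s` into
`𝔞`, which is quasi-regularity of `a`.

A polynomial involves only finitely many variables, so quasi-regularity may be checked on finite
subfamilies, where it follows from regularity by adding one element `x` at a time: writing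
`F = X * H + G` with `G` free of the new variable `X`, regularity of `x` modulo the old ideal `J`,
hence modulo every `Jⁿ`, puts `H(a)` into `Jⁿ`, and `H` is handled by induction on the degree.
-/

section Polynomial

open MvPolynomial

lemma homogeneousSubmodule_eq_span_prod_X (R σ : Type*) [CommSemiring R] (n : ℕ) :
    homogeneousSubmodule σ R n =
      Submodule.span R (Set.range fun f : Fin n → σ => ∏ i, X (f i)) := by
  rw [← homogeneousSubmodule_one_pow, homogeneousSubmodule_one_eq_span_X, Submodule.span_pow]
  congr 1
  ext p
  simp only [Set.mem_pow, List.prod_ofFn, Set.mem_range]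
  refine ⟨fun ⟨x, hx⟩ => ?_, fun ⟨f, hf⟩ => ⟨fun i => ⟨X (f i), f i, rfl⟩, hf⟩⟩
  choose f hf using fun i => (x i).2
  exact ⟨f, by simpa only [hf] using hx⟩

lemma isHomogeneous_prod_X {R σ : Type*} [CommSemiring R] {n : ℕ} (f : Fin n → σ) :
    (∏ i, X (f i) : MvPolynomial σ R).IsHomogeneous n := by
  simpa using IsHomogeneous.prod Finset.univ _ _ fun i _ => isHomogeneous_X R (f i)

lemma exists_isHomogeneous_eq_X_mul_add_rename {R σ τ : Type*} [CommSemiring R] {f : τ → σ}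
    {i : σ} (hf : ∀ j, j = i ∨ j ∈ Set.range f) {n : ℕ} {F : MvPolynomial σ R}
    (hF : F.IsHomogeneous (n + 1)) :
    ∃ (H : MvPolynomial σ R) (G : MvPolynomial τ R),
      H.IsHomogeneous n ∧ G.IsHomogeneous (n + 1) ∧ F = X i * H + rename f G := by
  rw [← mem_homogeneousSubmodule, homogeneousSubmodule_eq_span_prod_X] at hF
  induction hF using Submodule.span_induction with
  | mem F hF =>
    obtain ⟨g, rfl⟩ := hF
    by_cases hg : ∃ k, g k = i
    · obtain ⟨k, rfl⟩ := hg
      exact ⟨∏ j, X (g (k.succAbove j)), 0, isHomogeneous_prod_X _, isHomogeneous_zero _ _ _,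
        (Fin.prod_univ_succAbove _ k).trans (by rw [map_zero, add_zero])⟩
    · choose g' hg' using fun k => (hf (g k)).resolve_left (not_exists.1 hg k)
      exact ⟨0, ∏ k, X (g' k), isHomogeneous_zero _ _ _, isHomogeneous_prod_X _,
        by simp only [mul_zero, zero_add, map_prod, rename_X, hg']⟩
  | zero => exact ⟨0, 0, isHomogeneous_zero _ _ _, isHomogeneous_zero _ _ _, by simp⟩
  | add _ _ _ _ h h' =>
    obtain ⟨H, G, hH, hG, rfl⟩ := h
    obtain ⟨H', G', hH', hG', rfl⟩ := h'
    exact ⟨H + H', G + G', hH.add hH', hG.add hG', by rw [map_add]; ring⟩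
  | smul r _ _ h =>
    obtain ⟨H, G, hH, hG, rfl⟩ := h
    exact ⟨r • H, r • G, (homogeneousSubmodule σ R n).smul_mem r hH,
      (homogeneousSubmodule τ R (n + 1)).smul_mem r hG,
      by rw [map_smul, smul_add, mul_smul_comm]⟩

lemma exists_isHomogeneous_map_eq {R S σ : Type*} [CommSemiring R] [CommSemiring S] {φ : R →+* S}
    (hφ : Function.Surjective φ) {n : ℕ} {p : MvPolynomial σ S} (hp : p.IsHomogeneous n) :
    ∃ F : MvPolynomial σ R, F.IsHomogeneous n ∧ map φ F = p := by
  obtain ⟨F, rfl⟩ := map_surjective φ hφ p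
  refine ⟨homogeneousComponent n F, homogeneousComponent_isHomogeneous n F, ?_⟩
  ext m
  rw [coeff_map, coeff_homogeneousComponent]
  split_ifs with hm
  · rw [coeff_map]
  · rw [map_zero, hp.coeff_eq_zero hm]

variable {R σ τ : Type*} [CommRing R]

lemma mem_mul_span_pow_iff_exists_isHomogeneous {a : σ → R} {I : Ideal R} {n : ℕ} {y : R} :
    y ∈ I * Ideal.span (Set.range a) ^ n ↔
      ∃ F : MvPolynomial σ R, F.IsHomogeneous n ∧ F ∈ I.map C ∧ eval a F = y := by
  constructor
  · intro hy
    induction hy using Submodule.mul_induction_on' with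
    | mem_mul_mem x hx z hz =>
      obtain ⟨F, hF, rfl⟩ := (Ideal.mem_span_pow_iff_exists_isHomogeneous a z).1 hz
      exact ⟨C x * F, hF.C_mul x, Ideal.mul_mem_right _ _ (Ideal.mem_map_of_mem C hx),
        by rw [map_mul, eval_C]⟩
    | add _ _ _ _ h h' =>
      obtain ⟨F, hF, hFI, rfl⟩ := h
      obtain ⟨F', hF', hFI', rfl⟩ := h'
      exact ⟨F + F', hF.add hF', add_mem hFI hFI', map_add _ _ _⟩
  · rintro ⟨F, hF, hFI, rfl⟩
    rw [F.as_sum, map_sum]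
    refine sum_mem fun m hm => ?_
    rw [← mul_one (coeff m F), ← C_mul_monomial, map_mul, eval_C]
    have hdeg : m.degree = n := not_imp_comm.1 hF.coeff_eq_zero (mem_support_iff.1 hm)
    exact Ideal.mul_mem_mul (mem_map_C_iff.1 hFI m)
      ((Ideal.mem_span_pow_iff_exists_isHomogeneous a _).2
        ⟨monomial m 1, isHomogeneous_monomial 1 hdeg, rfl⟩)

lemma mem_map_C_of_eval_mem_span_pow_succ {a : σ → R} {n : ℕ}
    (h : ∀ F : MvPolynomial σ R, F.IsHomogeneous n → eval a F = 0 →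
      F ∈ (Ideal.span (Set.range a)).map C)
    {F : MvPolynomial σ R} (hF : F.IsHomogeneous n)
    (hFa : eval a F ∈ Ideal.span (Set.range a) ^ (n + 1)) :
    F ∈ (Ideal.span (Set.range a)).map C := by
  rw [pow_succ', mem_mul_span_pow_iff_exists_isHomogeneous] at hFa
  obtain ⟨G, hG, hGI, hGF⟩ := hFa
  have hsub := h (F - G) (hF.sub hG) (by rw [map_sub, hGF, sub_self])
  simpa using add_mem hsub hGI

lemma rename_mem_map_C {f : τ → σ} {I J : Ideal R} (hJI : J ≤ I) {F : MvPolynomial τ R}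
    (hF : F ∈ J.map C) : rename f F ∈ I.map C := by
  have hle : (J.map C).map (rename f).toRingHom ≤ I.map C := by
    rw [Ideal.map_map]
    refine Ideal.map_le_iff_le_comap.2 fun x hx => ?_
    simpa using Ideal.mem_map_of_mem C (hJI hx)
  exact hle (Ideal.mem_map_of_mem _ hF)

/-- A family `a` with `𝔞 = (a)` is quasi-regular if every homogeneous polynomial of degree `n`
whose value at `a` lies in `𝔞ⁿ⁺¹` has all its coefficients in `𝔞`, i.e. if the canonical map
from the polynomial ring over `R/𝔞` to the associated graded ring of `𝔞` is injective.
That the coefficients of `F` lie in `𝔞` is expressed by `F ∈ 𝔞.map C`. -/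
def IsQuasiRegular (a : σ → R) : Prop :=
  ∀ n, ∀ F : MvPolynomial σ R, F.IsHomogeneous n →
    eval a F ∈ Ideal.span (Set.range a) ^ (n + 1) → F ∈ (Ideal.span (Set.range a)).map C

namespace IsQuasiRegular

variable {a : σ → R}

lemma of_isEmpty [IsEmpty σ] : IsQuasiRegular a := by
  intro n F _ hFa
  rw [F.eq_C_of_isEmpty, eval_C] at hFa
  rw [F.eq_C_of_isEmpty]
  exact Ideal.mem_map_of_mem C (Ideal.pow_le_self n.succ_ne_zero hFa)

lemma isSMulRegular_quotient_pow (h : IsQuasiRegular a) {x : R}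
    (hx : IsSMulRegular (R ⧸ Ideal.span (Set.range a)) x) (n : ℕ) :
    IsSMulRegular (R ⧸ Ideal.span (Set.range a) ^ n) x := by
  simp only [isSMulRegular_quotient_iff_mem_of_smul_mem, smul_eq_mul] at hx ⊢
  induction n with
  | zero => simp
  | succ n ih =>
    intro y hxy
    obtain ⟨F, hF, rfl⟩ := (Ideal.mem_span_pow_iff_exists_isHomogeneous a y).1
      (ih y (Ideal.pow_le_pow_right n.le_succ hxy))
    have hxF : C x * F ∈ (Ideal.span (Set.range a)).map C :=
      h n _ (hF.C_mul x) (by rwa [map_mul, eval_C])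
    rw [pow_succ', mem_mul_span_pow_iff_exists_isHomogeneous]
    refine ⟨F, hF, mem_map_C_iff.2 fun m => hx _ ?_, rfl⟩
    simpa only [coeff_C_mul] using mem_map_C_iff.1 hxF m

lemma of_comp_of_isSMulRegular {f : τ → σ} (h : IsQuasiRegular (a ∘ f)) {i : σ}
    (hf : ∀ j, j = i ∨ j ∈ Set.range f)
    (hi : IsSMulRegular (R ⧸ Ideal.span (Set.range (a ∘ f))) (a i)) : IsQuasiRegular a := by
  set J := Ideal.span (Set.range (a ∘ f))
  set I := Ideal.span (Set.range a)
  have hJI : J ≤ I := Ideal.span_mono (Set.range_comp_subset_range f a)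
  have hai : a i ∈ I := Ideal.subset_span ⟨i, rfl⟩
  intro n
  induction n with
  | zero =>
    intro F hF hFa
    obtain ⟨c, rfl⟩ : ∃ c, F = C c := ⟨_, totalDegree_eq_zero_iff_eq_C.1
      ((totalDegree_zero_iff_isHomogeneous σ).2 hF)⟩
    exact Ideal.mem_map_of_mem C (by simpa using hFa)
  | succ n ih =>
    refine fun F => mem_map_C_of_eval_mem_span_pow_succ fun F hF hFa => ?_
    obtain ⟨H, G, hH, hG, rfl⟩ := exists_isHomogeneous_eq_X_mul_add_rename hf hF
    have heval : a i * eval a H + eval (a ∘ f) G = 0 := by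
      rwa [map_add, map_mul, eval_X, eval_rename] at hFa
    have hHJ : eval a H ∈ J ^ (n + 1) := by
      refine (isSMulRegular_quotient_iff_mem_of_smul_mem _ _).1
        (h.isSMulRegular_quotient_pow hi (n + 1)) _ ?_
      rw [smul_eq_mul, eq_neg_of_add_eq_zero_left heval]
      exact neg_mem ((Ideal.mem_span_pow_iff_exists_isHomogeneous _ _).2 ⟨G, hG, rfl⟩)
    have hHI : H ∈ I.map C := ih H hH (Ideal.pow_right_mono hJI _ hHJ)
    -- Replacing `a i * H(a)` by `a i * K(a ∘ f)` gives a relation in the variables of `τ` only.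
    obtain ⟨K, hK, hKH⟩ := (Ideal.mem_span_pow_iff_exists_isHomogeneous _ _).1 hHJ
    have hKG : C (a i) * K + G ∈ J.map C := by
      refine h (n + 1) _ ((hK.C_mul _).add hG) ?_
      rw [map_add, map_mul, eval_C, hKH, heval]
      exact zero_mem _
    have hGI : rename f G ∈ I.map C := by
      have := rename_mem_map_C (f := f) hJI hKG
      rw [map_add, map_mul, rename_C] at this
      exact (Ideal.add_mem_iff_right _
        (Ideal.mul_mem_right _ _ (Ideal.mem_map_of_mem C hai))).1 this
    exact add_mem (Ideal.mul_mem_left _ _ hHI) hGI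

lemma of_isWeaklyRegular (a : σ → R) {l : List σ}
    (hl : RingTheory.Sequence.IsWeaklyRegular R (l.map a)) :
    IsQuasiRegular fun j : {j // j ∈ l} => a j := by
  induction l using List.reverseRecOn with
  | nil =>
    have : IsEmpty {j // j ∈ ([] : List σ)} := ⟨fun j => List.not_mem_nil j.2⟩
    exact of_isEmpty
  | append_singleton l i ih =>
    rw [List.map_append, RingTheory.Sequence.isWeaklyRegular_append_iff, List.map_singleton,
      RingTheory.Sequence.isWeaklyRegular_singleton_iff] at hl
    have hspan : (Ideal.ofList (l.map a) • ⊤ : Ideal R) =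
        Ideal.span (Set.range fun j : {j // j ∈ l} => a j) := by
      rw [smul_eq_mul, Ideal.mul_top]
      exact congrArg Ideal.span (Set.ext fun x => by simp)
    let f : {j // j ∈ l} → {j // j ∈ l ++ [i]} := fun j => ⟨j, List.mem_append_left _ j.2⟩
    refine of_comp_of_isSMulRegular (f := f) (ih hl.1) (i := ⟨i, by simp⟩) (fun ⟨j, hj⟩ => ?_) ?_
    · rw [Set.mem_range, Subtype.mk.injEq]
      rcases List.mem_append.1 hj with hj | hj
      · exact Or.inr ⟨⟨j, hj⟩, rfl⟩
      · exact Or.inl (List.mem_singleton.1 hj)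
    · exact hspan ▸ hl.2

lemma of_forall_finset (h : ∀ S : Finset σ, ∃ T : Set σ, ↑S ⊆ T ∧
    IsQuasiRegular fun j : T => a j) : IsQuasiRegular a := by
  classical
  intro n
  refine fun F => mem_map_C_of_eval_mem_span_pow_succ fun F hF hFa => ?_
  obtain ⟨T, hST, hT⟩ := h F.vars
  obtain ⟨G, rfl⟩ := exists_rename_eq_of_vars_subset_range F ((↑) : T → σ)
    Subtype.val_injective (by rwa [Subtype.range_coe])
  rw [IsHomogeneous.rename_isHomogeneous_iff Subtype.val_injective] at hF
  rw [eval_rename] at hFa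
  exact rename_mem_map_C (Ideal.span_mono (Set.range_comp_subset_range _ a))
    (hT n G hF (by rw [show eval (fun j : T => a j) G = 0 from hFa]; exact zero_mem _))

lemma of_forall_exists_isWeaklyRegular (h : ∀ S : Finset σ, ∃ l : List σ, (∀ j ∈ S, j ∈ l) ∧
    RingTheory.Sequence.IsWeaklyRegular R (l.map a)) : IsQuasiRegular a :=
  of_forall_finset fun S =>
    let ⟨l, hSl, hl⟩ := h S
    ⟨{j | j ∈ l}, hSl, of_isWeaklyRegular a hl⟩

end IsQuasiRegular

end Polynomial

lemma exists_perm_of_sum_single_eq {σ : Type*} {n : ℕ} {f g : Fin n → σ}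
    (h : (∑ i, Finsupp.single (f i) 1 : σ →₀ ℕ) = ∑ i, Finsupp.single (g i) 1) :
    ∃ τ : Equiv.Perm (Fin n), f = g ∘ τ := by
  classical
  have hfiber (c : σ) : Nonempty ({i // f i = c} ≃ {i // g i = c}) := by
    rw [← Fintype.card_eq, Fintype.card_subtype, Fintype.card_subtype]
    simpa [Finsupp.finsetSum_apply, Finsupp.single_apply] using DFunLike.congr_fun h c
  let e (c : σ) := (hfiber c).some
  exact ⟨Equiv.ofFiberEquiv e, funext fun i => (Equiv.ofFiberEquiv_map e i).symm⟩

lemma multilinearMap_apply_mem_span_range_comp {k ι M N Φ : Type*} [CommSemiring k] [Finite ι]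
    [AddCommMonoid M] [Module k M] [AddCommMonoid N] [Module k N]
    (μ : MultilinearMap k (fun _ : ι => M) N) {b : Φ → M}
    (hb : Submodule.span k (Set.range b) = ⊤) (x : ι → M) :
    μ x ∈ Submodule.span k (Set.range fun f : ι → Φ => μ (b ∘ f)) := by
  classical
  have := Fintype.ofFinite ι
  have hx (i : ι) : ∃ c : Φ →₀ k, ∑ j ∈ c.support, c j • b j = x i :=
    Finsupp.mem_span_range_iff_exists_finsupp.1 (hb ▸ Submodule.mem_top)
  choose c hc using hx
  rw [← funext hc, μ.map_sum_finset]
  refine Submodule.sum_mem _ fun f _ => ?_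
  rw [μ.map_smul_univ]
  exact Submodule.smul_mem _ _ (Submodule.subset_span ⟨f, rfl⟩)

namespace SymPow

variable (k M : Type*) [CommRing k] [AddCommGroup M] [Module k M] (s : ℕ)

/-- The product `x₁ ⋯ xₛ` in the symmetric power, as a multilinear map. -/
def tprod : MultilinearMap k (fun _ : Fin s => M) (SymPow k M s) :=
  (Submodule.mkQ _).compMultilinearMap (PiTensorProduct.tprod k)

lemma span_range_tprod : Submodule.span k (Set.range (tprod k M s)) = ⊤ := by
  rw [tprod, LinearMap.coe_compMultilinearMap, Set.range_comp, Submodule.span_image,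
    PiTensorProduct.span_tprod_eq_top, Submodule.map_top, Submodule.range_mkQ]

variable {k M s}

lemma tprod_comp_perm (x : Fin s → M) (τ : Equiv.Perm (Fin s)) :
    tprod k M s (x ∘ τ) = tprod k M s x := by
  refine Eq.symm ((Submodule.Quotient.eq _).2 (Submodule.subset_span ?_))
  exact ⟨x, τ, rfl⟩

section Lift

variable {N : Type*} [AddCommGroup N] [Module k N] (f : MultilinearMap k (fun _ : Fin s => M) N)
  (hf : ∀ (x : Fin s → M) (τ : Equiv.Perm (Fin s)), f (x ∘ τ) = f x)

/-- The linear map out of the symmetric power induced by a symmetric multilinear map. -/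
def lift : SymPow k M s →ₗ[k] N :=
  Submodule.liftQ _ (PiTensorProduct.lift f) <| Submodule.span_le.2 <| by
    rintro _ ⟨x, τ, rfl⟩
    rw [SetLike.mem_coe, LinearMap.mem_ker, map_sub, PiTensorProduct.lift.tprod,
      PiTensorProduct.lift.tprod, hf, sub_self]

lemma lift_tprod (x : Fin s → M) : lift f hf (tprod k M s x) = f x :=
  PiTensorProduct.lift.tprod x

end Lift

section OfPolynomial

open MvPolynomial

variable {Φ : Type*} (b : Φ → M)

/-- The linear map from polynomials to the symmetric power sending the monomial
`X_{α₁} ⋯ X_{αₛ}` to `b_{α₁} ⋯ b_{αₛ}`, and the monomials of degree other than `s` to `0`. -/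
noncomputable def ofPolynomial (s : ℕ) : MvPolynomial Φ k →ₗ[k] SymPow k M s :=
  (basisMonomials Φ k).constr k <|
    Function.extend (fun f : Fin s → Φ => ∑ i, Finsupp.single (f i) 1)
      (fun f => tprod k M s (b ∘ f)) 0

lemma ofPolynomial_prod_X (f : Fin s → Φ) :
    ofPolynomial b s (∏ i, X (f i)) = tprod k M s (b ∘ f) := by
  have hfactor : Function.FactorsThrough (fun f : Fin s → Φ => tprod k M s (b ∘ f))
      fun f => ∑ i, Finsupp.single (f i) 1 := fun f g hfg => by
    obtain ⟨τ, rfl⟩ := exists_perm_of_sum_single_eq hfg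
    exact tprod_comp_perm (b ∘ g) τ
  have hmonomial : (∏ i, X (f i) : MvPolynomial Φ k) =
      basisMonomials Φ k (∑ i, Finsupp.single (f i) 1) := by
    simp only [coe_basisMonomials, monomial_sum_one, X]
  rw [hmonomial, ofPolynomial, Module.Basis.constr_basis, hfactor.extend_apply]

lemma exists_isHomogeneous_ofPolynomial_eq (hb : Submodule.span k (Set.range b) = ⊤)
    (z : SymPow k M s) :
    ∃ p : MvPolynomial Φ k, p.IsHomogeneous s ∧ ofPolynomial b s p = z := by
  have himage : (homogeneousSubmodule Φ k s).map (ofPolynomial b s) =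
      Submodule.span k (Set.range fun f : Fin s → Φ => tprod k M s (b ∘ f)) := by
    rw [homogeneousSubmodule_eq_span_prod_X, Submodule.map_span, ← Set.range_comp]
    exact congrArg _ (congrArg _ (funext fun f => ofPolynomial_prod_X b f))
  have htop : (homogeneousSubmodule Φ k s).map (ofPolynomial b s) = ⊤ := by
    rw [himage, eq_top_iff, ← span_range_tprod, Submodule.span_le]
    rintro _ ⟨x, rfl⟩
    exact multilinearMap_apply_mem_span_range_comp (tprod k M s) hb x
  exact Submodule.mem_map.1 (htop ▸ Submodule.mem_top)

end OfPolynomial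

end SymPow

section QuotientMultilinear

variable {R S ι M P : Type*} [CommRing R] [CommRing S] [Algebra R S] [Finite ι] [AddCommGroup M]
  [Module R M] [AddCommGroup P] [Module R P] [Module S P] [IsScalarTower R S P]
  {N : Submodule R M} [Module S (M ⧸ N)] [IsScalarTower R S (M ⧸ N)]
  {f : MultilinearMap R (fun _ : ι => M) P} (hf : ∀ x i, x i ∈ N → f x = 0)

include hf

lemma multilinearMap_apply_eq_of_mk_eq_mk {x y : ι → M}
    (hxy : ∀ i, (Submodule.Quotient.mk (x i) : M ⧸ N) = Submodule.Quotient.mk (y i)) :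
    f x = f y := by
  have := Fintype.ofFinite ι
  let : LinearOrder ι := LinearOrder.lift' (Fintype.equivFin ι) (Fintype.equivFin ι).injective
  rw [← sub_eq_zero, ← Finset.piecewise_univ y x, f.map_sub_map_piecewise]
  refine Finset.sum_eq_zero fun i _ => hf _ i ?_
  simpa using (Submodule.Quotient.eq N).1 (hxy i)

lemma multilinearMap_apply_out_update_mk [DecidableEq ι] (x : ι → M ⧸ N) (i : ι) (u : M) :
    f (fun j => (Function.update x i (Submodule.Quotient.mk u) j).out) =
      f (Function.update (fun j => (x j).out) i u) := by
  refine multilinearMap_apply_eq_of_mk_eq_mk hf fun j => (Quotient.out_eq _).trans ?_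
  rcases eq_or_ne j i with rfl | hj
  · simp only [Function.update_self]
  · simp only [Function.update_of_ne hj]
    exact (Quotient.out_eq (x j)).symm

variable (hS : Function.Surjective (algebraMap R S))

/-- The multilinear map on `M ⧸ N` induced by a multilinear map on `M` that vanishes as soon as
one argument lies in `N`; it is linear over a quotient `S` of `R` acting on both sides. -/
noncomputable def quotientMultilinear : MultilinearMap S (fun _ : ι => M ⧸ N) P where
  toFun x := f fun i => (x i).out
  map_update_add' x i u v := by
    obtain ⟨u, rfl⟩ := Submodule.Quotient.mk_surjective _ u
    obtain ⟨v, rfl⟩ := Submodule.Quotient.mk_surjective _ v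
    simp only [← Submodule.Quotient.mk_add, multilinearMap_apply_out_update_mk hf, f.map_update_add]
  map_update_smul' x i c u := by
    obtain ⟨u, rfl⟩ := Submodule.Quotient.mk_surjective _ u
    obtain ⟨c, rfl⟩ := hS c
    simp only [algebraMap_smul, ← Submodule.Quotient.mk_smul, multilinearMap_apply_out_update_mk hf,
      f.map_update_smul]

lemma quotientMultilinear_mk (x : ι → M) :
    quotientMultilinear hf hS (fun i => Submodule.Quotient.mk (x i)) = f x :=
  multilinearMap_apply_eq_of_mk_eq_mk hf fun i => Quotient.out_eq (Submodule.Quotient.mk (x i))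

end QuotientMultilinear

section AssociatedGraded

variable {R : Type*} [CommRing R]

/-- The conormal module `I/I²`, as a quotient of the module `I`. -/
abbrev ConormalModule (I : Ideal R) := ↥I ⧸ Submodule.comap I.subtype (I ^ 2)

/-- The degree `s` component `Iˢ/Iˢ⁺¹` of the associated graded ring of `I`, as a quotient of
the module `Iˢ`. -/
abbrev PowQuotient (I : Ideal R) (s : ℕ) :=
  ↥(I ^ s) ⧸ Submodule.comap (I ^ s).subtype (I ^ (s + 1))

variable (I : Ideal R) (s : ℕ)

lemma prod_mem_pow {x : Fin s → R} (hx : ∀ i, x i ∈ I) : ∏ i, x i ∈ I ^ s := by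
  simpa using Ideal.prod_mem_prod (s := Finset.univ) (I := fun _ => I) fun i _ => hx i

/-- The product `(x₁, …, xₛ) ↦ x₁ ⋯ xₛ + Iˢ⁺¹` of `s` elements of `I`. -/
def powQuotientProduct : MultilinearMap R (fun _ : Fin s => I) (PowQuotient I s) :=
  (Submodule.mkQ _).compMultilinearMap <|
    ((MultilinearMap.mkPiAlgebra R (Fin s) R).compLinearMap fun _ => I.subtype).codRestrict (I ^ s)
      fun x => prod_mem_pow I s fun i => (x i).2

lemma powQuotientProduct_apply (x : Fin s → I) :
    powQuotientProduct I s x =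
      Submodule.Quotient.mk ⟨∏ i, (x i : R), prod_mem_pow I s fun i => (x i).2⟩ := rfl

lemma powQuotientProduct_eq_zero (x : Fin s → I) (i : Fin s)
    (hi : x i ∈ Submodule.comap I.subtype (I ^ 2)) : powQuotientProduct I s x = 0 := by
  obtain ⟨n, rfl⟩ := Nat.exists_eq_succ_of_ne_zero i.pos.ne'
  rw [powQuotientProduct_apply, Submodule.Quotient.mk_eq_zero]
  change ∏ j, (x j : R) ∈ I ^ (n + 1 + 1)
  rw [Fin.prod_univ_succAbove _ i, show n + 1 + 1 = 2 + n by ring, pow_add]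
  exact Ideal.mul_mem_mul hi (prod_mem_pow I n fun j => (x (i.succAbove j)).2)

variable [Module (R ⧸ I) (ConormalModule I)] [IsScalarTower R (R ⧸ I) (ConormalModule I)]
  [Module (R ⧸ I) (PowQuotient I s)] [IsScalarTower R (R ⧸ I) (PowQuotient I s)]

/-- The canonical map from the `s`-th symmetric power of `I/I²` to `Iˢ/Iˢ⁺¹`. -/
noncomputable def conormalProduct :
    SymPow (R ⧸ I) (ConormalModule I) s →ₗ[R ⧸ I] PowQuotient I s :=
  SymPow.lift (quotientMultilinear (powQuotientProduct_eq_zero I s) Ideal.Quotient.mk_surjective)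
    fun x τ => by
      choose y hy using fun i => Submodule.Quotient.mk_surjective _ (x i)
      obtain rfl := funext hy
      simp only [Function.comp_def, quotientMultilinear_mk, powQuotientProduct_apply,
        Equiv.prod_comp τ fun i => (y i : R)]

lemma conormalProduct_tprod_mk (x : Fin s → I) :
    conormalProduct I s
        (SymPow.tprod (R ⧸ I) (ConormalModule I) s fun i => Submodule.Quotient.mk (x i)) =
      Submodule.Quotient.mk ⟨∏ i, (x i : R), prod_mem_pow I s fun i => (x i).2⟩ := by
  rw [conormalProduct, SymPow.lift_tprod, quotientMultilinear_mk, powQuotientProduct_apply]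

end AssociatedGraded

section Generators

open MvPolynomial

variable {R Φ : Type*} [CommRing R] {I : Ideal R} {a : Φ → I}

lemma span_range_mk_eq_top [Module (R ⧸ I) (ConormalModule I)]
    [IsScalarTower R (R ⧸ I) (ConormalModule I)]
    (hI : I = Ideal.span (Set.range fun α => (a α : R))) :
    Submodule.span (R ⧸ I)
      (Set.range fun α => (Submodule.Quotient.mk (a α) : ConormalModule I)) = ⊤ := by
  have hspan : Submodule.span R (Set.range a) = ⊤ := by
    refine Submodule.map_injective_of_injective I.injective_subtype ?_
    rw [Submodule.map_span, ← Set.range_comp, Submodule.map_top, Submodule.range_subtype]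
    exact hI.symm
  rw [← Submodule.restrictScalars_eq_top_iff R (R ⧸ I),
    Submodule.restrictScalars_span R (R ⧸ I) Ideal.Quotient.mk_surjective]
  change Submodule.span R (Set.range (Submodule.mkQ _ ∘ a)) = ⊤
  rw [Set.range_comp, Submodule.span_image, hspan, Submodule.map_top, Submodule.range_mkQ]

variable (s : ℕ) [Module (R ⧸ I) (ConormalModule I)] [IsScalarTower R (R ⧸ I) (ConormalModule I)]
  [Module (R ⧸ I) (PowQuotient I s)] [IsScalarTower R (R ⧸ I) (PowQuotient I s)]

lemma conormalProduct_ofPolynomial {F : MvPolynomial Φ R} (hF : F.IsHomogeneous s) :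
    ∃ h : eval (fun α => (a α : R)) F ∈ I ^ s,
      conormalProduct I s (SymPow.ofPolynomial (fun α => Submodule.Quotient.mk (a α)) s
        (map (Ideal.Quotient.mk I) F)) = Submodule.Quotient.mk ⟨_, h⟩ := by
  rw [← mem_homogeneousSubmodule, homogeneousSubmodule_eq_span_prod_X] at hF
  induction hF using Submodule.span_induction with
  | mem F hF =>
    obtain ⟨f, rfl⟩ := hF
    simp only [map_prod, map_X, eval_X, SymPow.ofPolynomial_prod_X]
    exact ⟨prod_mem_pow I s fun i => (a (f i)).2, conormalProduct_tprod_mk I s fun i => a (f i)⟩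
  | zero => exact ⟨by simp, by simp only [map_zero]; rfl⟩
  | add F G _ _ hF hG =>
    obtain ⟨hF, hF'⟩ := hF
    obtain ⟨hG, hG'⟩ := hG
    refine ⟨by rw [map_add]; exact add_mem hF hG, ?_⟩
    simp only [map_add, hF', hG', ← Submodule.Quotient.mk_add]
    rfl
  | smul r F _ hF =>
    obtain ⟨hF, hF'⟩ := hF
    refine ⟨by rw [smul_eval]; exact Ideal.mul_mem_left _ _ hF, ?_⟩
    have hmap : map (Ideal.Quotient.mk I) (r • F) =
        Ideal.Quotient.mk I r • map (Ideal.Quotient.mk I) F := by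
      rw [smul_eq_C_mul, map_mul, map_C, ← smul_eq_C_mul]
    simp only [hmap, map_smul, hF', smul_eval]
    exact algebraMap_smul (R ⧸ I) r _

variable (hI : I = Ideal.span (Set.range fun α => (a α : R)))

include hI

lemma conormalProduct_surjective : Function.Surjective (conormalProduct I s) := by
  intro y
  obtain ⟨⟨y, hy⟩, rfl⟩ := Submodule.Quotient.mk_surjective _ y
  obtain ⟨F, hF, rfl⟩ := (Ideal.mem_span_pow_iff_exists_isHomogeneous _ y).1 (hI ▸ hy)
  exact ⟨_, (conormalProduct_ofPolynomial s hF).2⟩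

lemma conormalProduct_injective (ha : IsQuasiRegular fun α => (a α : R)) :
    Function.Injective (conormalProduct I s) := by
  rw [injective_iff_map_eq_zero]
  intro z hz
  obtain ⟨p, hp, rfl⟩ := SymPow.exists_isHomogeneous_ofPolynomial_eq _ (span_range_mk_eq_top hI) z
  obtain ⟨F, hF, rfl⟩ := exists_isHomogeneous_map_eq Ideal.Quotient.mk_surjective hp
  obtain ⟨_, hFz⟩ := conormalProduct_ofPolynomial (a := a) s hF
  rw [hFz, Submodule.Quotient.mk_eq_zero] at hz
  have hFI : F ∈ I.map C := by
    rw [hI]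
    exact ha s F hF (hI ▸ hz)
  have hker : F ∈ RingHom.ker (map (Ideal.Quotient.mk I)) := by
    rwa [ker_map, Ideal.mk_ker]
  rw [RingHom.mem_ker.1 hker, map_zero]

end Generators

theorem symPow_ideal_quotient_iso_general
    (R : Type*) [CommRing R] (Φ : Type*) (a : Φ → R) (ha : IsQuasiRegular a)
    (𝔞 : Ideal R) (h𝔞 : 𝔞 = Ideal.span (Set.range a)) (s : ℕ)
    (htor1 : Module.IsTorsionBySet R
      (↥𝔞 ⧸ Submodule.comap 𝔞.subtype (𝔞 ^ 2)) 𝔞)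
    (htor2 : Module.IsTorsionBySet R
      (↥(𝔞 ^ s) ⧸ Submodule.comap (𝔞 ^ s).subtype (𝔞 ^ (s + 1))) 𝔞) :
    letI := htor1.module
    letI := htor2.module
    ∃ e : SymPow (R ⧸ 𝔞) (↥𝔞 ⧸ Submodule.comap 𝔞.subtype (𝔞 ^ 2)) s ≃ₗ[R ⧸ 𝔞]
        (↥(𝔞 ^ s) ⧸ Submodule.comap (𝔞 ^ s).subtype (𝔞 ^ (s + 1))),
      ∀ (x : Fin s → R) (hx : ∀ i, x i ∈ 𝔞) (hp : (∏ i, x i) ∈ 𝔞 ^ s),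
        e (Submodule.Quotient.mk (PiTensorProduct.tprod (R ⧸ 𝔞)
              (fun i => Submodule.Quotient.mk ⟨x i, hx i⟩)))
          = Submodule.Quotient.mk ⟨∏ i, x i, hp⟩ := by
  let := htor1.module
  let := htor2.module
  have := htor1.isScalarTower (S := R)
  have := htor2.isScalarTower (S := R)
  have ha𝔞 (α : Φ) : a α ∈ 𝔞 := h𝔞 ▸ Ideal.subset_span ⟨α, rfl⟩
  exact ⟨LinearEquiv.ofBijective (conormalProduct 𝔞 s)
      ⟨conormalProduct_injective (a := fun α => ⟨a α, ha𝔞 α⟩) s h𝔞 ha,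
        conormalProduct_surjective (a := fun α => ⟨a α, ha𝔞 α⟩) s h𝔞⟩,
    fun x hx _ => conormalProduct_tprod_mk 𝔞 s fun i => ⟨x i, hx i⟩⟩

/-- Let `R` be a commutative ring and `(a α)` a family of elements of `R`
such that any finitely many pairwise distinct members form a regular sequence on `R` in some
order, and let `𝔞` be the ideal generated by the `a α`.  Then for every `s ≥ 1` there is an
isomorphism of `R/𝔞`-modules `Sym^s_{R/𝔞}(𝔞/𝔞²) ≅ 𝔞^s/𝔞^{s+1}` sending
`(a₁+𝔞²)·…·(aₛ+𝔞²)` to `a₁⋯aₛ + 𝔞^{s+1}` for all `a₁, …, aₛ ∈ 𝔞`.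
(The `R/𝔞`-module structures on `𝔞/𝔞²` and `𝔞^s/𝔞^{s+1}` are the canonical ones, obtained
from the fact that `𝔞` annihilates these quotients.) -/
theorem symPow_ideal_quotient_iso
    (R : Type*) [CommRing R] (Φ : Type*) (a : Φ → R)
    (hreg : ∀ l : List Φ, l.Nodup →
      ∃ l' : List Φ, l'.Perm l ∧ RingTheory.Sequence.IsRegular R (l'.map a))
    (𝔞 : Ideal R) (h𝔞 : 𝔞 = Ideal.span (Set.range a))
    (s : ℕ) (hs : 1 ≤ s)
    (htor1 : Module.IsTorsionBySet R
      (↥𝔞 ⧸ Submodule.comap 𝔞.subtype (𝔞 ^ 2)) 𝔞)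
    (htor2 : Module.IsTorsionBySet R
      (↥(𝔞 ^ s) ⧸ Submodule.comap (𝔞 ^ s).subtype (𝔞 ^ (s + 1))) 𝔞) :
    letI := htor1.module
    letI := htor2.module
    ∃ e : SymPow (R ⧸ 𝔞) (↥𝔞 ⧸ Submodule.comap 𝔞.subtype (𝔞 ^ 2)) s ≃ₗ[R ⧸ 𝔞]
        (↥(𝔞 ^ s) ⧸ Submodule.comap (𝔞 ^ s).subtype (𝔞 ^ (s + 1))),
      ∀ (x : Fin s → R) (hx : ∀ i, x i ∈ 𝔞) (hp : (∏ i, x i) ∈ 𝔞 ^ s),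
        e (Submodule.Quotient.mk (PiTensorProduct.tprod (R ⧸ 𝔞)
              (fun i => Submodule.Quotient.mk ⟨x i, hx i⟩)))
          = Submodule.Quotient.mk ⟨∏ i, x i, hp⟩ := by
  refine symPow_ideal_quotient_iso_general R Φ a
    (IsQuasiRegular.of_forall_exists_isWeaklyRegular fun S => ?_) 𝔞 h𝔞 s htor1 htor2
  obtain ⟨l, hl, hreg⟩ := hreg S.toList S.nodup_toList
  exact ⟨l, fun j hj => hl.mem_iff.2 (Finset.mem_toList.2 hj), hreg.toIsWeaklyRegular⟩
end

section
/- Let A be a commutative ring, σ a type, P = A[X_α : α ∈ σ] the polynomial ring, and L the free A-module on σ with ι : L → P the A-linear map sending the basis vector e_α to the variable X_α. Then the Koszul-type complex K(L, P) is a resolution of A: the zeroth homology H_0(K(L,P)) is isomorphic to A via the constant-term map P → A, and H_i(K(L,P)) = 0 for every i ≥ 1. -/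
open scoped TensorProduct

/-- The `n`-th exterior power `⋀[A]^n M`, as a type. -/
def ExtPow (A : Type*) [CommRing A] (M : Type*) [AddCommGroup M] [Module A M]
    (n : ℕ) : Type _ := ↥(⋀[A]^n M)

noncomputable instance (A : Type*) [CommRing A] (M : Type*) [AddCommGroup M] [Module A M]
    (n : ℕ) : AddCommGroup (ExtPow A M n) := inferInstanceAs (AddCommGroup ↥(⋀[A]^n M))

noncomputable instance (A : Type*) [CommRing A] (M : Type*) [AddCommGroup M] [Module A M]
    (n : ℕ) : Module A (ExtPow A M n) := inferInstanceAs (Module A ↥(⋀[A]^n M))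

/-- The element `x₁ ∧ … ∧ xₙ` of the `n`-th exterior power `⋀[A]^n M`. -/
noncomputable def wedgeGen (A : Type*) [CommRing A] (M : Type*) [AddCommGroup M]
    [Module A M] (n : ℕ) (x : Fin n → M) : ExtPow A M n :=
  ⟨ExteriorAlgebra.ιMulti A n x,
    ExteriorAlgebra.ιMulti_range A n (Set.mem_range_self x)⟩

/-!
For a variable `X_a`, wedging with `e_a` and taking the difference quotient
`(y - y|_{X_a = 0}) / X_a` is a homotopy between the identity of `K(L, P)` and the endomorphism
killing `e_a` and `X_a`. A given chain involves only finitely many variables, so killing them one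
after another replaces a cycle, modulo boundaries, by its image under the endomorphism which kills
all variables at once. That endomorphism vanishes in positive degrees and is the constant-term map
in degree zero.
-/

section ExteriorPower

variable {A : Type*} [CommRing A] {M M' : Type*} [AddCommGroup M] [Module A M]
  [AddCommGroup M'] [Module A M'] {i : ℕ}

namespace ExtPow

theorem span_range_wedgeGen : Submodule.span A (Set.range (wedgeGen A M i)) = ⊤ :=
  exteriorPower.ιMulti_span A i M

/-- Left exterior multiplication `w ↦ x ∧ w`, linear in both `x` and `w`. -/
noncomputable def wedgeLeft : M →ₗ[A] ExtPow A M i →ₗ[A] ExtPow A M (i + 1) :=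
  exteriorPower.alternatingMapLinearEquiv.toLinearMap ∘ₗ
    (exteriorPower.ιMulti A (i + 1)).curryLeft

theorem wedgeLeft_wedgeGen (x : M) (v : Fin i → M) :
    wedgeLeft x (wedgeGen A M i v) = wedgeGen A M (i + 1) (Fin.cons x v) :=
  exteriorPower.alternatingMapLinearEquiv_apply_ιMulti _ v

/-- The map `⋀ⁱ g : ⋀ⁱ M → ⋀ⁱ M'` induced by a linear map `g : M → M'`. -/
noncomputable def map (g : M →ₗ[A] M') : ExtPow A M i →ₗ[A] ExtPow A M' i :=
  exteriorPower.map i g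

theorem map_wedgeGen (g : M →ₗ[A] M') (v : Fin i → M) :
    map g (wedgeGen A M i v) = wedgeGen A M' i (g ∘ v) :=
  exteriorPower.map_apply_ιMulti g v

end ExtPow

theorem wedgeGen_cons_cons_self (x : M) (v : Fin i → M) :
    wedgeGen A M (i + 2) (Fin.cons x (Fin.cons x v)) = 0 :=
  (exteriorPower.ιMulti A (i + 2)).map_eq_zero_of_eq _ (i := 0) (j := 1) rfl Fin.zero_ne_one

end ExteriorPower

/-- The degree `i` term `⋀ⁱ M ⊗ N` of the Koszul complex of a linear map `M → B` with
coefficients in a `B`-module `N`. -/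
abbrev KoszulTerm (A : Type*) [CommRing A] (M N : Type*) [AddCommGroup M] [Module A M]
    [AddCommGroup N] [Module A N] (i : ℕ) : Type _ :=
  ExtPow A M i ⊗[A] N

namespace KoszulTerm

variable {A : Type*} [CommRing A] {M M' M'' N N' N'' : Type*}
  [AddCommGroup M] [Module A M] [AddCommGroup M'] [Module A M'] [AddCommGroup M''] [Module A M'']
  [AddCommGroup N] [Module A N] [AddCommGroup N'] [Module A N'] [AddCommGroup N''] [Module A N'']
  {i : ℕ}

theorem span_range_wedgeGen_tmul :
    Submodule.span A (Set.range fun p : (Fin i → M) × N ↦ wedgeGen A M i p.1 ⊗ₜ[A] p.2) = ⊤ := by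
  have h := Submodule.map₂_span_span A (TensorProduct.mk A (ExtPow A M i) N)
    (Set.range (wedgeGen A M i)) Set.univ
  rw [ExtPow.span_range_wedgeGen, Submodule.span_univ, TensorProduct.map₂_mk_top_top_eq_top,
    ← Set.range_id, Set.image2_range] at h
  exact h.symm

theorem hom_ext {Q : Type*} [AddCommGroup Q] [Module A Q] {f g : KoszulTerm A M N i →ₗ[A] Q}
    (h : ∀ v y, f (wedgeGen A M i v ⊗ₜ[A] y) = g (wedgeGen A M i v ⊗ₜ[A] y)) : f = g :=
  LinearMap.ext_on_range span_range_wedgeGen_tmul fun p ↦ h p.1 p.2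

/-- Left exterior multiplication `w ⊗ y ↦ (x ∧ w) ⊗ y` on the terms of the Koszul complex. -/
noncomputable def wedge : M →ₗ[A] KoszulTerm A M N i →ₗ[A] KoszulTerm A M N (i + 1) :=
  LinearMap.rTensorHom N ∘ₗ ExtPow.wedgeLeft

theorem wedge_wedgeGen_tmul (x : M) (v : Fin i → M) (y : N) :
    wedge x (wedgeGen A M i v ⊗ₜ[A] y) = wedgeGen A M (i + 1) (Fin.cons x v) ⊗ₜ[A] y :=
  congrArg (· ⊗ₜ[A] y) (ExtPow.wedgeLeft_wedgeGen x v)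

theorem hom_ext_wedge {Q : Type*} [AddCommGroup Q] [Module A Q]
    {f g : KoszulTerm A M N (i + 1) →ₗ[A] Q} (h : ∀ x z, f (wedge x z) = g (wedge x z)) :
    f = g :=
  hom_ext fun v y ↦ by
    simpa only [wedge_wedgeGen_tmul, Fin.cons_self_tail] using
      h (v 0) (wedgeGen A M i (Fin.tail v) ⊗ₜ[A] y)

theorem wedge_self (x : M) (z : KoszulTerm A M N i) : wedge x (wedge x z) = 0 := by
  suffices wedge x ∘ₗ wedge x = (0 : KoszulTerm A M N i →ₗ[A] _) from LinearMap.congr_fun this z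
  refine hom_ext fun v y ↦ ?_
  rw [LinearMap.comp_apply, wedge_wedgeGen_tmul, wedge_wedgeGen_tmul, wedgeGen_cons_cons_self,
    TensorProduct.zero_tmul, LinearMap.zero_apply]

theorem wedge_swap (x x' : M) (z : KoszulTerm A M N i) :
    wedge x (wedge x' z) = -wedge x' (wedge x z) := by
  have h := wedge_self (x + x') z
  simp only [map_add, LinearMap.add_apply, wedge_self, zero_add, add_zero] at h
  exact eq_neg_of_add_eq_zero_right h

/-- The map `⋀ⁱ g ⊗ h : ⋀ⁱ M ⊗ N → ⋀ⁱ M' ⊗ N'`. -/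
noncomputable def map (g : M →ₗ[A] M') (h : N →ₗ[A] N') :
    KoszulTerm A M N i →ₗ[A] KoszulTerm A M' N' i :=
  TensorProduct.map (ExtPow.map g) h

theorem map_wedgeGen_tmul (g : M →ₗ[A] M') (h : N →ₗ[A] N') (v : Fin i → M) (y : N) :
    map g h (wedgeGen A M i v ⊗ₜ[A] y) = wedgeGen A M' i (g ∘ v) ⊗ₜ[A] h y :=
  congrArg (· ⊗ₜ[A] h y) (ExtPow.map_wedgeGen g v)

theorem map_wedge (g : M →ₗ[A] M') (h : N →ₗ[A] N') (x : M) (z : KoszulTerm A M N i) :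
    map g h (wedge x z) = wedge (g x) (map g h z) := by
  suffices map g h ∘ₗ wedge x = wedge (g x) ∘ₗ map (i := i) g h from LinearMap.congr_fun this z
  refine hom_ext fun v y ↦ ?_
  simp only [LinearMap.comp_apply, wedge_wedgeGen_tmul, map_wedgeGen_tmul, Fin.comp_cons]

theorem map_id : map (.id : M →ₗ[A] M) (.id : N →ₗ[A] N) =
    (.id : KoszulTerm A M N i →ₗ[A] KoszulTerm A M N i) :=
  hom_ext fun v y ↦ map_wedgeGen_tmul (.id : M →ₗ[A] M) (.id : N →ₗ[A] N) v y

theorem map_map (g' : M' →ₗ[A] M'') (h' : N' →ₗ[A] N'') (g : M →ₗ[A] M') (h : N →ₗ[A] N')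
    (z : KoszulTerm A M N i) : map g' h' (map g h z) = map (g' ∘ₗ g) (h' ∘ₗ h) z := by
  suffices map g' h' ∘ₗ map g h = map (i := i) (g' ∘ₗ g) (h' ∘ₗ h) from LinearMap.congr_fun this z
  refine hom_ext fun v y ↦ ?_
  simp only [LinearMap.comp_apply, map_wedgeGen_tmul, LinearMap.coe_comp, Function.comp_assoc]

theorem map_zero_left_succ (h : N →ₗ[A] N') :
    map (0 : M →ₗ[A] M') h = (0 : KoszulTerm A M N (i + 1) →ₗ[A] _) :=
  hom_ext_wedge fun x z ↦ by
    rw [map_wedge, LinearMap.zero_apply, map_zero, LinearMap.zero_apply, LinearMap.zero_apply]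

section RankOne

variable (ℓ : M →ₗ[A] A) (x : M) (e : N →ₗ[A] N)

theorem wedge_comp_map_id_sub_smulRight :
    wedge x ∘ₗ map (.id - ℓ.smulRight x) e = wedge (i := i) x ∘ₗ map .id e := by
  induction i with
  | zero =>
    refine hom_ext fun v y ↦ ?_
    simp only [LinearMap.comp_apply, map_wedgeGen_tmul]
    rw [Subsingleton.elim (_ ∘ v) ((.id : M →ₗ[A] M) ∘ v)]
  | succ i ih =>
    refine hom_ext_wedge fun m z ↦ ?_
    have hz : wedge x (map (.id - ℓ.smulRight x) e z) = wedge x (map .id e z) :=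
      LinearMap.congr_fun ih z
    simp only [LinearMap.comp_apply, map_wedge]
    rw [wedge_swap, hz, wedge_swap]
    simp [wedge_self]

theorem map_id_sub_smulRight_wedge (m : M) (z : KoszulTerm A M N i) :
    map (.id - ℓ.smulRight x) e (wedge m z) =
      wedge m (map (.id - ℓ.smulRight x) e z) - ℓ m • wedge x (map .id e z) := by
  have hz : wedge x (map (.id - ℓ.smulRight x) e z) = wedge x (map .id e z) :=
    LinearMap.congr_fun (wedge_comp_map_id_sub_smulRight ℓ x e) z
  rw [map_wedge, ← hz]
  simp

end RankOne

section Scale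

variable {B : Type*} [CommRing B] [Algebra A B] [Module B N] [IsScalarTower A B N]

/-- Multiplication `w ⊗ y ↦ w ⊗ b y` by a scalar `b` on the terms of the Koszul complex. -/
noncomputable def scale (b : B) : KoszulTerm A M N i →ₗ[A] KoszulTerm A M N i :=
  map .id (Algebra.lsmul A A N b)

theorem scale_wedgeGen_tmul (b : B) (v : Fin i → M) (y : N) :
    scale b (wedgeGen A M i v ⊗ₜ[A] y) = wedgeGen A M i v ⊗ₜ[A] (b • y) :=
  map_wedgeGen_tmul _ _ v y

end Scale

/-- The degree one operator `w ⊗ y ↦ (x ∧ w) ⊗ q y`, used as a chain homotopy. -/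
noncomputable def homotopy (x : M) (q : N →ₗ[A] N) :
    KoszulTerm A M N i →ₗ[A] KoszulTerm A M N (i + 1) :=
  wedge x ∘ₗ map .id q

theorem homotopy_wedge (x : M) (q : N →ₗ[A] N) (m : M) (z : KoszulTerm A M N i) :
    homotopy x q (wedge m z) = -wedge m (homotopy x q z) := by
  simp only [homotopy, LinearMap.comp_apply, map_wedge, LinearMap.id_apply]
  rw [wedge_swap]

theorem homotopy_scale {B : Type*} [CommRing B] [Algebra A B] [Module B N] [IsScalarTower A B N]
    {x : M} {q e : N →ₗ[A] N} {b : B} {c : A} (hq : ∀ y, q (b • y) = b • q y + c • e y)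
    (z : KoszulTerm A M N i) :
    homotopy x q (scale b z) = scale b (homotopy x q z) + c • wedge x (map .id e z) := by
  suffices homotopy x q ∘ₗ scale b =
      scale b ∘ₗ homotopy x q + c • wedge (i := i) x ∘ₗ map .id e from LinearMap.congr_fun this z
  refine hom_ext fun v y ↦ ?_
  simp only [homotopy, LinearMap.comp_apply, LinearMap.add_apply, LinearMap.smul_apply,
    scale_wedgeGen_tmul, map_wedgeGen_tmul, wedge_wedgeGen_tmul, hq, TensorProduct.tmul_add,
    TensorProduct.tmul_smul, map_add, map_smul]

end KoszulTerm

/-- `d` is the differential of the Koszul complex of `f : M → B` with coefficients in `N`: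
`d (x₀ ∧ … ∧ xᵢ ⊗ y) = ∑ₖ (-1)ᵏ (x₀ ∧ … x̂ₖ … ∧ xᵢ) ⊗ f xₖ • y`. Such a `d` is unique, so
that it is treated as a variable. -/
def IsKoszulDifferential {A : Type*} [CommRing A] {M N B : Type*} [AddCommGroup M] [Module A M]
    [AddCommGroup N] [Module A N] [CommRing B] [Algebra A B] [Module B N] (f : M →ₗ[A] B)
    (d : ∀ i : ℕ, KoszulTerm A M N (i + 1) →ₗ[A] KoszulTerm A M N i) : Prop :=
  ∀ (i : ℕ) (x : Fin (i + 1) → M) (y : N),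
    d i (wedgeGen A M (i + 1) x ⊗ₜ[A] y) =
      ∑ k : Fin (i + 1), (-1 : ℤ) ^ (k : ℕ) •
        (wedgeGen A M i (x ∘ k.succAbove) ⊗ₜ[A] (f (x k) • y))

namespace IsKoszulDifferential

open KoszulTerm

variable {A : Type*} [CommRing A] {M M' N N' B B' : Type*} [AddCommGroup M] [Module A M]
  [AddCommGroup M'] [Module A M'] [AddCommGroup N] [Module A N] [AddCommGroup N'] [Module A N']
  [CommRing B] [Algebra A B] [Module B N] [CommRing B'] [Algebra A B'] [Module B' N']
  {f : M →ₗ[A] B} {d : ∀ i : ℕ, KoszulTerm A M N (i + 1) →ₗ[A] KoszulTerm A M N i}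
  {f' : M' →ₗ[A] B'} {d' : ∀ i : ℕ, KoszulTerm A M' N' (i + 1) →ₗ[A] KoszulTerm A M' N' i}

theorem apply_map (hd : IsKoszulDifferential f d) (hd' : IsKoszulDifferential f' d')
    {g : M →ₗ[A] M'} {h : N →ₗ[A] N'} (hgh : ∀ m y, h (f m • y) = f' (g m) • h y)
    (i : ℕ) (z : KoszulTerm A M N (i + 1)) : d' i (map g h z) = map g h (d i z) := by
  suffices d' i ∘ₗ map g h = map g h ∘ₗ d i from LinearMap.congr_fun this z
  refine hom_ext fun v y ↦ ?_
  simp only [LinearMap.comp_apply, map_wedgeGen_tmul, hd i, hd' i, map_sum, map_zsmul, hgh,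
    Function.comp_assoc, Function.comp_apply]

variable [IsScalarTower A B N]

theorem apply_scale (hd : IsKoszulDifferential f d) (b : B) (i : ℕ)
    (z : KoszulTerm A M N (i + 1)) : d i (scale b z) = scale b (d i z) :=
  hd.apply_map hd (fun _ _ ↦ smul_comm ..) i z

theorem apply_wedge_zero (hd : IsKoszulDifferential f d) (x : M) (z : KoszulTerm A M N 0) :
    d 0 (wedge x z) = scale (f x) z := by
  suffices d 0 ∘ₗ wedge x = scale (f x) from LinearMap.congr_fun this z
  refine hom_ext fun v y ↦ ?_
  rw [LinearMap.comp_apply, wedge_wedgeGen_tmul, hd, scale_wedgeGen_tmul]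
  simp [Subsingleton.elim _ v]

theorem apply_wedge_succ (hd : IsKoszulDifferential f d) (i : ℕ) (x : M)
    (z : KoszulTerm A M N (i + 1)) :
    d (i + 1) (wedge x z) = scale (f x) z - wedge x (d i z) := by
  suffices d (i + 1) ∘ₗ wedge x = scale (f x) - wedge x ∘ₗ d i from LinearMap.congr_fun this z
  refine hom_ext fun v y ↦ ?_
  have hcons (k : Fin (i + 1)) : (Fin.cons x v : Fin (i + 2) → M) ∘ k.succ.succAbove =
      Fin.cons x (v ∘ k.succAbove) := by
    funext j
    cases j using Fin.cases <;> simp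
  rw [LinearMap.comp_apply, LinearMap.sub_apply, LinearMap.comp_apply, wedge_wedgeGen_tmul, hd,
    scale_wedgeGen_tmul, Fin.sum_univ_succ, hd, map_sum, sub_eq_add_neg, ← Finset.sum_neg_distrib]
  congr 1
  · simp [Function.comp_def]
  · refine Finset.sum_congr rfl fun k _ ↦ ?_
    rw [hcons, map_zsmul, wedge_wedgeGen_tmul, Fin.cons_succ, Fin.val_succ, pow_succ, mul_neg_one,
      neg_smul]

theorem comp_eq_zero (hd : IsKoszulDifferential f d) (i : ℕ) : d i ∘ₗ d (i + 1) = 0 := by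
  induction i with
  | zero =>
    refine hom_ext_wedge fun x z ↦ ?_
    rw [LinearMap.comp_apply, hd.apply_wedge_succ, map_sub, hd.apply_scale, hd.apply_wedge_zero,
      sub_self, LinearMap.zero_apply]
  | succ i ih =>
    refine hom_ext_wedge fun x z ↦ ?_
    have hz : d i (d (i + 1) z) = 0 := LinearMap.congr_fun ih z
    rw [LinearMap.comp_apply, hd.apply_wedge_succ, map_sub, hd.apply_scale, hd.apply_wedge_succ,
      hz, map_zero, sub_zero, sub_self, LinearMap.zero_apply]

section Homotopy

variable {x : M} {ℓ : M →ₗ[A] A} {q e : N →ₗ[A] N}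

theorem comp_homotopy_zero (hd : IsKoszulDifferential f d) (he : ∀ y, f x • q y + e y = y) :
    d 0 ∘ₗ homotopy x q = .id - map (.id - ℓ.smulRight x) e := by
  refine hom_ext fun v y ↦ ?_
  rw [LinearMap.comp_apply, homotopy, LinearMap.comp_apply, hd.apply_wedge_zero,
    LinearMap.sub_apply, LinearMap.id_apply, map_wedgeGen_tmul, map_wedgeGen_tmul,
    scale_wedgeGen_tmul, eq_sub_of_add_eq (he y), TensorProduct.tmul_sub,
    Subsingleton.elim (_ ∘ v) v, Subsingleton.elim (_ ∘ v) v]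

theorem comp_homotopy_succ (hd : IsKoszulDifferential f d)
    (hq : ∀ m y, q (f m • y) = f m • q y + ℓ m • e y) (he : ∀ y, f x • q y + e y = y) (i : ℕ) :
    d (i + 1) ∘ₗ homotopy x q + homotopy x q ∘ₗ d i = .id - map (.id - ℓ.smulRight x) e := by
  induction i with
  | zero =>
    refine hom_ext_wedge fun m z ↦ ?_
    have hz : d 0 (homotopy x q z) = z - map (.id - ℓ.smulRight x) e z :=
      LinearMap.congr_fun (hd.comp_homotopy_zero he) z
    simp only [LinearMap.add_apply, LinearMap.comp_apply, LinearMap.sub_apply, LinearMap.id_apply]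
    rw [homotopy_wedge, map_neg, hd.apply_wedge_succ, hz, hd.apply_wedge_zero,
      homotopy_scale (hq m), map_id_sub_smulRight_wedge, map_sub]
    abel
  | succ i ih =>
    refine hom_ext_wedge fun m z ↦ ?_
    have hz : d (i + 1) (homotopy x q z) + homotopy x q (d i z) =
        z - map (.id - ℓ.smulRight x) e z := LinearMap.congr_fun ih z
    simp only [LinearMap.add_apply, LinearMap.comp_apply, LinearMap.sub_apply, LinearMap.id_apply]
    rw [homotopy_wedge, map_neg, hd.apply_wedge_succ, eq_sub_of_add_eq hz, hd.apply_wedge_succ,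
      map_sub (homotopy x q), homotopy_scale (hq m), homotopy_wedge, map_id_sub_smulRight_wedge,
      map_sub, map_sub]
    abel

end Homotopy

end IsKoszulDifferential

namespace PolynomialKoszul

open MvPolynomial KoszulTerm

variable {A : Type*} [CommRing A] {σ : Type*}

/-- The map `ι : L → P` from the free module on `σ` to the polynomial ring, `e_s ↦ X_s`. -/
noncomputable def varMap (A : Type*) [CommRing A] (σ : Type*) :
    (σ →₀ A) →ₗ[A] MvPolynomial σ A :=
  Finsupp.linearCombination A X

theorem varMap_single_one (s : σ) : varMap A σ (Finsupp.single s 1) = X s := by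
  simp [varMap]

/-- The endomorphism of the free module on `σ` which kills the basis vectors indexed by `T` and
fixes the others. -/
noncomputable def killBasis (T : Set σ) : (σ →₀ A) →ₗ[A] (σ →₀ A) :=
  Finsupp.linearCombination A (Tᶜ.indicator fun s ↦ Finsupp.single s 1)

/-- The endomorphism of the polynomial ring which kills the variables indexed by `T` and fixes
the others. -/
noncomputable def killVars (T : Set σ) : MvPolynomial σ A →ₐ[A] MvPolynomial σ A :=
  aeval (Tᶜ.indicator X)

theorem killBasis_singleton (a : σ) :
    killBasis {a} = .id - (Finsupp.lapply a : (σ →₀ A) →ₗ[A] A).smulRight (Finsupp.single a 1) := by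
  ext s : 2
  by_cases h : s = a <;> simp [killBasis, h]

theorem killBasis_empty : killBasis (∅ : Set σ) = (.id : (σ →₀ A) →ₗ[A] (σ →₀ A)) := by
  ext s : 2
  simp [killBasis]

theorem killBasis_univ : killBasis (Set.univ : Set σ) = (0 : (σ →₀ A) →ₗ[A] (σ →₀ A)) := by
  ext s : 2
  simp [killBasis]

theorem killBasis_comp_killBasis (S T : Set σ) :
    killBasis S ∘ₗ killBasis T = (killBasis (S ∪ T) : (σ →₀ A) →ₗ[A] (σ →₀ A)) := by
  ext s : 2
  by_cases hS : s ∈ S <;> by_cases hT : s ∈ T <;> simp [killBasis, hS, hT]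

theorem killBasis_eq_zero {T : Set σ} {x : σ →₀ A} (h : ↑x.support ⊆ T) : killBasis T x = 0 :=
  Finset.sum_eq_zero fun s hs ↦ by simp [h hs]

theorem killVars_empty : killVars (∅ : Set σ) = AlgHom.id A _ := by
  ext s : 1
  simp [killVars]

theorem killVars_comp_killVars (S T : Set σ) :
    (killVars S).comp (killVars T) = (killVars (S ∪ T) : MvPolynomial σ A →ₐ[A] _) := by
  ext s : 1
  by_cases hS : s ∈ S <;> by_cases hT : s ∈ T <;> simp [killVars, hS, hT]

theorem killVars_eq_C_constantCoeff {T : Set σ} {y : MvPolynomial σ A} (h : ↑y.vars ⊆ T) :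
    killVars T y = C (constantCoeff y) :=
  aeval_eq_constantCoeff_of_vars fun s hs ↦ by simp [h hs]

theorem killVars_varMap (T : Set σ) (x : σ →₀ A) :
    killVars T (varMap A σ x) = varMap A σ (killBasis T x) := by
  suffices (killVars T).toLinearMap ∘ₗ varMap A σ = varMap A σ ∘ₗ killBasis T from
    LinearMap.congr_fun this x
  ext s : 2
  by_cases h : s ∈ T <;> simp [killVars, killBasis, varMap, h]

theorem X_dvd_sub_killVars_singleton (a : σ) (y : MvPolynomial σ A) :
    X a ∣ y - killVars {a} y := by
  induction y using MvPolynomial.induction_on with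
  | C c => simp [killVars]
  | add p q hp hq => simpa only [map_add, add_sub_add_comm] using dvd_add hp hq
  | mul_X p s hp =>
    have hs : (X a : MvPolynomial σ A) ∣ X s - killVars {a} (X s) := by
      by_cases h : s = a <;> simp [killVars, h]
    have hps : p * X s - killVars {a} (p * X s) =
        (p - killVars {a} p) * X s + killVars {a} p * (X s - killVars {a} (X s)) := by
      rw [map_mul]
      ring
    exact hps ▸ dvd_add (hp.mul_right _) (hs.mul_left _)

/-- The difference quotient `(y - y|_{X_a = 0}) / X_a`. -/
noncomputable def diffQuot (a : σ) : MvPolynomial σ A →ₗ[A] MvPolynomial σ A where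
  toFun y := (y - killVars {a} y).divMonomial (Finsupp.single a 1)
  map_add' y z := by rw [map_add, add_sub_add_comm, add_divMonomial]
  map_smul' c y := by
    ext m
    simp [coeff_divMonomial, mul_sub]

theorem X_mul_diffQuot_add_killVars (a : σ) (y : MvPolynomial σ A) :
    X a * diffQuot a y + killVars {a} y = y := by
  obtain ⟨p, hp⟩ := X_dvd_sub_killVars_singleton a y
  have hquot : diffQuot a y = p := by
    change (y - killVars {a} y).divMonomial (Finsupp.single a 1) = p
    rw [hp, X_mul_divMonomial]
  rw [hquot, ← hp, sub_add_cancel]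

theorem diffQuot_varMap_mul (a : σ) (x : σ →₀ A) (y : MvPolynomial σ A) :
    diffQuot a (varMap A σ x * y) = varMap A σ x * diffQuot a y + x a • killVars {a} y := by
  have hxy := X_mul_diffQuot_add_killVars a (varMap A σ x * y)
  have hy := X_mul_diffQuot_add_killVars a y
  have hx : killVars {a} (varMap A σ x) = varMap A σ x - C (x a) * X a := by
    rw [killVars_varMap, killBasis_singleton]
    simp [varMap, smul_eq_C_mul]
  rw [map_mul (killVars {a}), hx] at hxy
  rw [← X_mul_cancel_left_iff (i := a), smul_eq_C_mul]
  linear_combination hxy - varMap A σ x * hy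

/-- The endomorphism of the Koszul complex of the polynomial ring which kills the basis vectors
and the variables indexed by `T`. -/
noncomputable def kill {i : ℕ} (T : Set σ) :
    KoszulTerm A (σ →₀ A) (MvPolynomial σ A) i →ₗ[A] KoszulTerm A (σ →₀ A) (MvPolynomial σ A) i :=
  KoszulTerm.map (killBasis T) (killVars T).toLinearMap

variable {i : ℕ}

theorem kill_empty (z : KoszulTerm A (σ →₀ A) (MvPolynomial σ A) i) : kill ∅ z = z := by
  rw [kill, killBasis_empty, killVars_empty]
  exact LinearMap.congr_fun KoszulTerm.map_id z

theorem kill_kill (S T : Set σ) (z : KoszulTerm A (σ →₀ A) (MvPolynomial σ A) i) :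
    kill S (kill T z) = kill (S ∪ T) z := by
  rw [kill, kill, KoszulTerm.map_map, killBasis_comp_killBasis, ← AlgHom.comp_toLinearMap,
    killVars_comp_killVars, kill]

theorem kill_univ_succ (z : KoszulTerm A (σ →₀ A) (MvPolynomial σ A) (i + 1)) :
    kill Set.univ z = 0 := by
  rw [kill, killBasis_univ, map_zero_left_succ, LinearMap.zero_apply]

theorem exists_finset_kill_eq_kill_univ (z : KoszulTerm A (σ →₀ A) (MvPolynomial σ A) i) :
    ∃ T : Finset σ, ∀ S : Set σ, ↑T ⊆ S → kill S z = kill Set.univ z := by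
  classical
  have hz : z ∈ Submodule.span A _ := span_range_wedgeGen_tmul.ge Submodule.mem_top
  induction hz using Submodule.span_induction with
  | mem _ hz =>
    obtain ⟨⟨v, y⟩, rfl⟩ := hz
    refine ⟨(Finset.univ.biUnion fun k ↦ (v k).support) ∪ y.vars, fun S hS ↦ ?_⟩
    rw [Finset.coe_union, Set.union_subset_iff] at hS
    have hv : killBasis S ∘ v = killBasis Set.univ ∘ v := funext fun k ↦ by
      have hk : ↑(v k).support ⊆ S := (Finset.coe_subset.2 <|
        Finset.subset_biUnion_of_mem (fun k ↦ (v k).support) (Finset.mem_univ k)).trans hS.1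
      rw [Function.comp_apply, Function.comp_apply, killBasis_eq_zero hk, killBasis_univ,
        LinearMap.zero_apply]
    have hy : killVars S y = killVars Set.univ y := by
      rw [killVars_eq_C_constantCoeff hS.2, killVars_eq_C_constantCoeff (Set.subset_univ _)]
    simp only [kill, map_wedgeGen_tmul, AlgHom.toLinearMap_apply, hv, hy]
  | zero => exact ⟨∅, fun S _ ↦ by rw [map_zero, map_zero]⟩
  | add z w _ _ hz hw =>
    obtain ⟨T, hT⟩ := hz
    obtain ⟨U, hU⟩ := hw
    refine ⟨T ∪ U, fun S hS ↦ ?_⟩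
    rw [Finset.coe_union, Set.union_subset_iff] at hS
    rw [map_add, map_add, hT S hS.1, hU S hS.2]
  | smul c z _ hz =>
    obtain ⟨T, hT⟩ := hz
    exact ⟨T, fun S hS ↦ by rw [map_smul, map_smul, hT S hS]⟩

theorem sub_kill_univ_mem {Z B : Submodule A (KoszulTerm A (σ →₀ A) (MvPolynomial σ A) i)}
    (hZ : ∀ T, ∀ z ∈ Z, kill T z ∈ Z) (hB : ∀ a, ∀ z ∈ Z, z - kill {a} z ∈ B)
    {z : KoszulTerm A (σ →₀ A) (MvPolynomial σ A) i} (hz : z ∈ Z) :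
    z - kill Set.univ z ∈ B := by
  classical
  have hfinset (T : Finset σ) : z - kill T z ∈ B := by
    induction T using Finset.induction_on with
    | empty => rw [Finset.coe_empty, kill_empty, sub_self]; exact B.zero_mem
    | insert a T _ ih =>
      rw [Finset.coe_insert, Set.insert_eq, ← kill_kill, ← sub_add_sub_cancel z (kill T z)]
      exact B.add_mem ih (hB a _ (hZ T z hz))
  obtain ⟨T, hT⟩ := exists_finset_kill_eq_kill_univ z
  exact hT T subset_rfl ▸ hfinset T

variable {d : ∀ i : ℕ, KoszulTerm A (σ →₀ A) (MvPolynomial σ A) (i + 1) →ₗ[A]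
  KoszulTerm A (σ →₀ A) (MvPolynomial σ A) i}

theorem differential_kill (hd : IsKoszulDifferential (varMap A σ) d) (T : Set σ)
    (z : KoszulTerm A (σ →₀ A) (MvPolynomial σ A) (i + 1)) :
    d i (kill T z) = kill T (d i z) :=
  hd.apply_map hd (fun x y ↦ by simp [killVars_varMap]) i z

theorem differential_homotopy_zero (hd : IsKoszulDifferential (varMap A σ) d) (a : σ)
    (z : KoszulTerm A (σ →₀ A) (MvPolynomial σ A) 0) :
    d 0 (homotopy (Finsupp.single a 1) (diffQuot a) z) = z - kill {a} z := by
  rw [kill, killBasis_singleton]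
  refine LinearMap.congr_fun (hd.comp_homotopy_zero fun y ↦ ?_) z
  rw [varMap_single_one]
  exact X_mul_diffQuot_add_killVars a y

theorem differential_homotopy_succ (hd : IsKoszulDifferential (varMap A σ) d) (a : σ)
    (z : KoszulTerm A (σ →₀ A) (MvPolynomial σ A) (i + 1)) :
    d (i + 1) (homotopy (Finsupp.single a 1) (diffQuot a) z) +
      homotopy (Finsupp.single a 1) (diffQuot a) (d i z) = z - kill {a} z := by
  rw [kill, killBasis_singleton]
  have hq (x : σ →₀ A) (y : MvPolynomial σ A) : diffQuot a (varMap A σ x • y) =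
      varMap A σ x • diffQuot a y + Finsupp.lapply (R := A) a x • (killVars {a}).toLinearMap y :=
    diffQuot_varMap_mul a x y
  refine LinearMap.congr_fun (hd.comp_homotopy_succ hq (fun y ↦ ?_) i) z
  rw [varMap_single_one]
  exact X_mul_diffQuot_add_killVars a y

theorem ker_differential_eq_range (hd : IsKoszulDifferential (varMap A σ) d) (i : ℕ) :
    LinearMap.ker (d i) = LinearMap.range (d (i + 1)) := by
  refine le_antisymm (fun z hz ↦ ?_) (LinearMap.range_le_ker_iff.2 (hd.comp_eq_zero i))
  have hkill (T : Set σ) (w) (hw : w ∈ LinearMap.ker (d i)) : kill T w ∈ LinearMap.ker (d i) := by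
    rw [LinearMap.mem_ker, differential_kill hd, LinearMap.mem_ker.1 hw, map_zero]
  have hhomotopy (a : σ) (w) (hw : w ∈ LinearMap.ker (d i)) :
      w - kill {a} w ∈ LinearMap.range (d (i + 1)) := by
    rw [← differential_homotopy_succ hd, LinearMap.mem_ker.1 hw, map_zero, add_zero]
    exact LinearMap.mem_range_self _ _
  simpa only [kill_univ_succ, sub_zero] using sub_kill_univ_mem hkill hhomotopy hz

section Augmentation

variable {φ : KoszulTerm A (σ →₀ A) (MvPolynomial σ A) 0 →ₗ[A] A}

theorem kill_univ_zero
    (hφ : ∀ v y, φ (wedgeGen A (σ →₀ A) 0 v ⊗ₜ[A] y) = constantCoeff y)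
    (z : KoszulTerm A (σ →₀ A) (MvPolynomial σ A) 0) :
    kill Set.univ z = φ z • (wedgeGen A (σ →₀ A) 0 Fin.elim0 ⊗ₜ[A] 1) := by
  suffices kill Set.univ = φ.smulRight (wedgeGen A (σ →₀ A) 0 Fin.elim0 ⊗ₜ[A] 1) from
    LinearMap.congr_fun this z
  refine hom_ext fun v y ↦ ?_
  rw [LinearMap.smulRight_apply, hφ, kill, map_wedgeGen_tmul, AlgHom.toLinearMap_apply,
    killVars_eq_C_constantCoeff (Set.subset_univ _), ← TensorProduct.tmul_smul, smul_eq_C_mul,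
    mul_one, Subsingleton.elim (_ ∘ v) Fin.elim0]

theorem surjective_augmentation
    (hφ : ∀ v y, φ (wedgeGen A (σ →₀ A) 0 v ⊗ₜ[A] y) = constantCoeff y) :
    Function.Surjective φ := fun c ↦
  ⟨wedgeGen A (σ →₀ A) 0 Fin.elim0 ⊗ₜ[A] C c, by rw [hφ, constantCoeff_C]⟩

theorem augmentation_comp_differential (hd : IsKoszulDifferential (varMap A σ) d)
    (hφ : ∀ v y, φ (wedgeGen A (σ →₀ A) 0 v ⊗ₜ[A] y) = constantCoeff y) : φ ∘ₗ d 0 = 0 := by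
  refine hom_ext fun v y ↦ ?_
  have hconst : constantCoeff (varMap A σ (v 0)) = 0 := by
    simp [varMap, Finsupp.linearCombination_apply, Finsupp.sum]
  rw [LinearMap.comp_apply, hd]
  simp [hφ, hconst]

theorem ker_augmentation_eq_range (hd : IsKoszulDifferential (varMap A σ) d)
    (hφ : ∀ v y, φ (wedgeGen A (σ →₀ A) 0 v ⊗ₜ[A] y) = constantCoeff y) :
    LinearMap.ker φ = LinearMap.range (d 0) := by
  refine le_antisymm (fun z hz ↦ ?_)
    (LinearMap.range_le_ker_iff.2 (augmentation_comp_differential hd hφ))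
  have hhomotopy (a : σ) (w) (_ : w ∈ (⊤ : Submodule A _)) :
      w - kill {a} w ∈ LinearMap.range (d 0) :=
    ⟨_, differential_homotopy_zero hd a w⟩
  simpa only [kill_univ_zero hφ, LinearMap.mem_ker.1 hz, zero_smul, sub_zero] using
    sub_kill_univ_mem (fun _ _ _ ↦ Submodule.mem_top) hhomotopy (z := z) Submodule.mem_top

end Augmentation

end PolynomialKoszul

/-- Let `A` be a commutative ring, `σ` a type, `P = A[Xα : α ∈ σ]` the
polynomial ring, `L` the free `A`-module on `σ`, and `ι : L → P` the `A`-linear map sending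
the basis vector `eα` to `Xα`.  Consider the Koszul-type complex `K(L, P)` with terms
`K(L,P)ᵢ = ⋀ᴬⁱ L ⊗_A P` and the differential determined on generators by
`∂((x₁∧…∧xᵢ) ⊗ y) = Σₖ (−1)^{k+1} (x₁∧…∧x̂ₖ∧…∧xᵢ) ⊗ ι(xₖ)·y`.
Then `K(L,P)` is a resolution of `A`: the constant-term map `P → A` induces an isomorphism
`H₀(K(L,P)) ≅ A` (i.e. the induced augmentation `φ : K(L,P)₀ → A` is surjective with kernel
exactly the image of `∂₀`), and `Hᵢ(K(L,P)) = 0` for every `i ≥ 1`. -/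
theorem koszul_complex_polynomial_resolution
    (A : Type*) [CommRing A] (σ : Type*)
    (dK : ∀ i : ℕ,
      (ExtPow A (σ →₀ A) (i+1) ⊗[A] MvPolynomial σ A) →ₗ[A]
        (ExtPow A (σ →₀ A) i ⊗[A] MvPolynomial σ A))
    (hdK : ∀ (i : ℕ) (x : Fin (i+1) → (σ →₀ A)) (y : MvPolynomial σ A),
      dK i (wedgeGen A (σ →₀ A) (i+1) x ⊗ₜ[A] y) =
        ∑ k : Fin (i+1), (-1 : ℤ) ^ (k : ℕ) •
          (wedgeGen A (σ →₀ A) i (x ∘ k.succAbove) ⊗ₜ[A]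
            (Finsupp.linearCombination A (fun α => MvPolynomial.X α) (x k) * y)))
    (φ : (ExtPow A (σ →₀ A) 0 ⊗[A] MvPolynomial σ A) →ₗ[A] A)
    (hφ : ∀ (v : Fin 0 → (σ →₀ A)) (y : MvPolynomial σ A),
      φ (wedgeGen A (σ →₀ A) 0 v ⊗ₜ[A] y) = MvPolynomial.constantCoeff y) :
    Function.Surjective φ ∧ LinearMap.ker φ = LinearMap.range (dK 0) ∧
      ∀ i : ℕ, LinearMap.ker (dK i) = LinearMap.range (dK (i+1)) := by
  have hd : IsKoszulDifferential (PolynomialKoszul.varMap A σ) dK := hdK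
  exact ⟨PolynomialKoszul.surjective_augmentation hφ,
    PolynomialKoszul.ker_augmentation_eq_range hd hφ,
    PolynomialKoszul.ker_differential_eq_range hd⟩
end

section
/- Let A be a commutative ring, σ a type, P = A[X_α : α ∈ σ] the polynomial ring, and L the free A-module on σ with ι : L → P sending the basis vector e_α to X_α. Then for every P-module M and every i ≥ 0 there is a natural isomorphism of A-modules Tor_i^P(A, M) ≅ H_i(K(L, M)), where A is a P-module via evaluation of every variable at 0. -/
open scoped TensorProduct

universe u

/-- `A` regarded as a module over `P = A[Xα : α ∈ σ]` via the evaluation homomorphism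
`P → A` sending every `Xα` to `0` (a type synonym of `A` carrying this module structure). -/
def EvalZero (A : Type u) [CommRing A] (σ : Type u) : Type u := A

instance (A : Type u) [CommRing A] (σ : Type u) : AddCommGroup (EvalZero A σ) :=
  inferInstanceAs (AddCommGroup A)

noncomputable instance (A : Type u) [CommRing A] (σ : Type u) :
    Module (MvPolynomial σ A) (EvalZero A σ) :=
  Module.compHom A (MvPolynomial.aeval (0 : σ → A) : MvPolynomial σ A →ₐ[A] A).toRingHom

/-- `Tor_i^P(A, M)` for `P = A[Xα : α ∈ σ]`, with `A` a `P`-module via evaluation at `0`. -/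
noncomputable def TorPoly (A : Type u) [CommRing A] (σ : Type u) (M : Type u)
    [AddCommGroup M] [Module (MvPolynomial σ A) M] (i : ℕ) : Type u :=
  ↥(((CategoryTheory.Tor (ModuleCat.{u} (MvPolynomial σ A)) i).obj
      (ModuleCat.of (MvPolynomial σ A) (EvalZero A σ))).obj
    (ModuleCat.of (MvPolynomial σ A) M))

noncomputable instance (A : Type u) [CommRing A] (σ : Type u) (M : Type u)
    [AddCommGroup M] [Module (MvPolynomial σ A) M] (i : ℕ) :
    AddCommGroup (TorPoly A σ M i) :=
  inferInstanceAs (AddCommGroup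
    ↥(((CategoryTheory.Tor (ModuleCat.{u} (MvPolynomial σ A)) i).obj
        (ModuleCat.of (MvPolynomial σ A) (EvalZero A σ))).obj
      (ModuleCat.of (MvPolynomial σ A) M)))

noncomputable instance (A : Type u) [CommRing A] (σ : Type u) (M : Type u)
    [AddCommGroup M] [Module (MvPolynomial σ A) M] (i : ℕ) :
    Module (MvPolynomial σ A) (TorPoly A σ M i) :=
  inferInstanceAs (Module (MvPolynomial σ A)
    ↥(((CategoryTheory.Tor (ModuleCat.{u} (MvPolynomial σ A)) i).obj
        (ModuleCat.of (MvPolynomial σ A) (EvalZero A σ))).obj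
      (ModuleCat.of (MvPolynomial σ A) M)))

/-- The `A`-module structure on `Tor_i^P(A, M)` obtained by restricting scalars along
`A → P`. -/
noncomputable instance (A : Type u) [CommRing A] (σ : Type u) (M : Type u)
    [AddCommGroup M] [Module (MvPolynomial σ A) M] (i : ℕ) :
    Module A (TorPoly A σ M i) :=
  Module.compHom _ (algebraMap A (MvPolynomial σ A))

/-!
Since `L` is free, so are its exterior powers, and `M ↦ K(L, M)` is an exact functor to chain
complexes; its `H₀` is `M / (X_α) M = A ⊗_P M`. If `M = P`, division by `X_α` is a homotopy on
`K(L, M)` from the identity to the operator that deletes the `e_α`-direction. A chain involves only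
finitely many basis vectors, so composing these homotopies shows that every cycle of positive degree
is a boundary, and the same holds for every projective `M`, a direct summand of a free module. Given
this acyclicity, dimension shifting along a projective resolution of `M` identifies the homology of
`K(L, M)` with the left derived functors of `A ⊗_P -`.
-/

namespace Koszul

open MvPolynomial

section Differential

variable {A : Type*} [CommRing A] {L : Type*} [AddCommGroup L] [Module A L]

section

/-- The exterior product `x₁, …, xₙ ↦ x₁ ∧ … ∧ xₙ`, as an alternating map into `ExtPow`. -/
noncomputable def wedge (n : ℕ) : L [⋀^Fin n]→ₗ[A] ExtPow A L n :=
  exteriorPower.ιMulti A n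

/-- The linear map out of `ExtPow` induced by an alternating map. -/
noncomputable def extLift {N : Type*} [AddCommGroup N] [Module A N] {n : ℕ}
    (f : L [⋀^Fin n]→ₗ[A] N) : ExtPow A L n →ₗ[A] N :=
  exteriorPower.alternatingMapLinearEquiv f

@[simp]
theorem extLift_wedge {N : Type*} [AddCommGroup N] [Module A N] {n : ℕ}
    (f : L [⋀^Fin n]→ₗ[A] N) (v : Fin n → L) : extLift f (wedge n v) = f v :=
  exteriorPower.alternatingMapLinearEquiv_apply_ιMulti f v

/-- The functoriality of `ExtPow`. -/
noncomputable def extMap (n : ℕ) (f : L →ₗ[A] L) : ExtPow A L n →ₗ[A] ExtPow A L n :=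
  extLift ((wedge n).compLinearMap f)

theorem extMap_wedge {n : ℕ} (f : L →ₗ[A] L) (v : Fin n → L) :
    extMap n f (wedge n v) = wedge n (fun k ↦ f (v k)) :=
  extLift_wedge _ v

variable {M : Type*} [AddCommGroup M] [Module A M]

theorem hom_ext {N : Type*} [AddCommGroup N] [Module A N] {n : ℕ}
    {f g : ExtPow A L n ⊗[A] M →ₗ[A] N}
    (h : ∀ (v : Fin n → L) (y : M), f (wedge n v ⊗ₜ[A] y) = g (wedge n v ⊗ₜ[A] y)) :
    f = g :=
  TensorProduct.ext <| exteriorPower.linearMap_ext <| AlternatingMap.ext fun v ↦ LinearMap.ext (h v)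

variable (A L M) in
theorem span_wedge_tmul (n : ℕ) :
    Submodule.span A (Set.image2 (fun v (y : M) ↦ wedge (A := A) n v ⊗ₜ[A] y)
      (Set.univ : Set (Fin n → L)) Set.univ) = ⊤ := by
  have span_wedge : Submodule.span A (Set.range (wedge n)) = (⊤ : Submodule A (ExtPow A L n)) :=
    exteriorPower.ιMulti_span A n L
  rw [← TensorProduct.map₂_mk_top_top_eq_top, ← span_wedge,
    ← Submodule.span_univ (R := A) (M := M), Submodule.map₂_span_span, ← Set.image_univ,
    Set.image2_image_left]
  rfl

end

variable {P : Type*} [CommRing P] [Algebra A P] (ι : L →ₗ[A] P)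
  (M : Type*) [AddCommGroup M] [Module P M] [Module A M] [IsScalarTower A P M]

/-- The map `x ↦ (v ↦ (y ↦ v₁ ∧ … ∧ vₙ ⊗ ι(x) y))`, whose alternatization is the Koszul
differential. -/
noncomputable def wedgeTmulSMul (n : ℕ) :
    L →ₗ[A] L [⋀^Fin n]→ₗ[A] (M →ₗ[A] ExtPow A L n ⊗[A] M) where
  toFun x := (LinearMap.lcomp A _ (Algebra.lsmul A A M (ι x))).compAlternatingMap
    ((TensorProduct.mk A _ M).compAlternatingMap (wedge n))
  map_add' x x' := by ext; simp [TensorProduct.tmul_add]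
  map_smul' a x := by ext; simp

@[simp]
theorem wedgeTmulSMul_apply (n : ℕ) (x : L) (v : Fin n → L) (y : M) :
    wedgeTmulSMul ι M n x v y = wedge n v ⊗ₜ[A] (ι x • y) := rfl

/-- The differential `⋀ⁿ⁺¹ L ⊗ M → ⋀ⁿ L ⊗ M` of the Koszul complex of an `A`-linear map
`ι : L → P` with coefficients in a `P`-module `M`. -/
noncomputable def differential (n : ℕ) : ExtPow A L (n + 1) ⊗[A] M →ₗ[A] ExtPow A L n ⊗[A] M :=
  TensorProduct.lift (extLift (AlternatingMap.alternatizeUncurryFin (wedgeTmulSMul ι M n)))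

theorem differential_wedge_tmul (n : ℕ) (v : Fin (n + 1) → L) (y : M) :
    differential ι M n (wedge (n + 1) v ⊗ₜ[A] y) =
      ∑ k : Fin (n + 1),
        (-1 : ℤ) ^ (k : ℕ) • (wedge n (k.removeNth v) ⊗ₜ[A] (ι (v k) • y)) := by
  simp [differential, AlternatingMap.alternatizeUncurryFin_apply, LinearMap.sum_apply]

theorem differential_comp_differential (n : ℕ) :
    differential ι M n ∘ₗ differential ι M (n + 1) = 0 := by
  let f : L →ₗ[A] L →ₗ[A] L [⋀^Fin n]→ₗ[A] (M →ₗ[A] ExtPow A L n ⊗[A] M) :=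
    LinearMap.mk₂ A (fun x x' ↦
        (LinearMap.lcomp A _ (Algebra.lsmul A A M (ι x))).compAlternatingMap
          (wedgeTmulSMul ι M n x'))
      (fun _ _ _ ↦ by ext; simp [TensorProduct.tmul_add])
      (fun _ _ _ ↦ by ext; simp)
      (fun _ _ _ ↦ by ext; simp)
      (fun _ _ _ ↦ by ext; simp)
  have f_symm (x x' : L) : f x x' = f x' x := by ext; simp [f, smul_smul, mul_comm]
  refine hom_ext fun v y ↦ ?_
  have double_sum_eq_zero := LinearMap.congr_fun (DFunLike.congr_fun
    (AlternatingMap.alternatizeUncurryFin_alternatizeUncurryFinLM_comp_of_symmetric f_symm) v) y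
  simpa [AlternatingMap.alternatizeUncurryFin_apply, LinearMap.sum_apply, differential_wedge_tmul,
    f] using double_sum_eq_zero

variable {M}
  {N : Type*} [AddCommGroup N] [Module P N] [Module A N] [IsScalarTower A P N]

theorem lTensor_comp_differential (f : M →ₗ[P] N) (n : ℕ) :
    (f.restrictScalars A).lTensor _ ∘ₗ differential ι M n =
      differential ι N n ∘ₗ (f.restrictScalars A).lTensor _ :=
  hom_ext fun v y ↦ by simp [differential_wedge_tmul]

theorem exact_differential_iff (n : ℕ) :
    Function.Exact (differential ι M (n + 1)) (differential ι M n) ↔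
      ∀ z, differential ι M n z = 0 → z ∈ LinearMap.range (differential ι M (n + 1)) :=
  ⟨fun h z ↦ (h z).1, fun h z ↦ ⟨h z, by
    rintro ⟨w, rfl⟩
    exact LinearMap.congr_fun (differential_comp_differential ι M n) w⟩⟩

theorem exact_differential_of_leftInverse {i : M →ₗ[P] N} {r : N →ₗ[P] M}
    (h : r ∘ₗ i = LinearMap.id) {n : ℕ}
    (hN : Function.Exact (differential ι N (n + 1)) (differential ι N n)) :
    Function.Exact (differential ι M (n + 1)) (differential ι M n) := by
  rw [exact_differential_iff] at hN ⊢
  intro z hz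
  have hiz : differential ι N n ((i.restrictScalars A).lTensor _ z) = 0 := by
    rw [← LinearMap.comp_apply, ← lTensor_comp_differential, LinearMap.comp_apply, hz, map_zero]
  obtain ⟨w, hw⟩ := hN _ hiz
  refine ⟨(r.restrictScalars A).lTensor _ w, ?_⟩
  rw [← LinearMap.comp_apply, ← lTensor_comp_differential, LinearMap.comp_apply, hw,
    ← LinearMap.comp_apply, ← LinearMap.lTensor_comp, ← LinearMap.restrictScalars_comp, h]
  exact LinearMap.congr_fun (LinearMap.lTensor_id _ _) z

end Differential

section Homotopy

variable {A L : Type*} [CommRing A] [AddCommGroup L] [Module A L]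

theorem alternatingMap_sub_smul {ι N : Type*} [Fintype ι] [DecidableEq ι] [AddCommGroup N]
    [Module A N] (g : L [⋀^ι]→ₗ[A] N) (v : ι → L) (c : ι → A) (e : L) :
    g (fun k ↦ v k - c k • e) = g v - ∑ k, c k • g (Function.update v k e) := by
  have two_le_card (s : Finset ι) (hs : 2 ≤ s.card) :
      g (s.piecewise (fun k ↦ -c k • e) v) = 0 := by
    obtain ⟨i, hi, j, hj, hij⟩ := Finset.one_lt_card.1 hs
    have smul_piecewise := g.toMultilinearMap.map_piecewise_smul (fun k ↦ -c k)
      (s.piecewise (fun _ ↦ e) v) s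
    rw [AlternatingMap.coe_multilinearMap, g.map_eq_zero_of_eq (s.piecewise (fun _ ↦ e) v)
      (by simp [hi, hj]) hij, smul_zero] at smul_piecewise
    rw [← smul_piecewise]
    congr 1
    ext k
    by_cases hk : k ∈ s <;> simp [hk]
  have taylor := g.toMultilinearMap.map_add_eq_map_add_linearDeriv_add v (fun k ↦ -c k • e)
  simp only [AlternatingMap.coe_multilinearMap] at taylor
  rw [Finset.sum_eq_zero fun s hs ↦ two_le_card s (Finset.mem_filter.1 hs).2,
    MultilinearMap.linearDeriv_apply] at taylor
  simpa [Pi.add_def, ← sub_eq_add_neg] using taylor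

theorem alternatingMap_update {N : Type*} [AddCommGroup N] [Module A N] {n : ℕ}
    (g : L [⋀^Fin (n + 1)]→ₗ[A] N) (v : Fin (n + 1) → L) (k : Fin (n + 1)) (e : L) :
    g (Function.update v k e) = (-1 : ℤ) ^ (k : ℕ) • g (Fin.cons e (k.removeNth v)) := by
  rw [← Fin.insertNth_removeNth, AlternatingMap.map_insertNth]
  rfl

theorem extMap_id_sub_smulRight_wedge (e : L) (c : Module.Dual A L) {n : ℕ}
    (v : Fin (n + 1) → L) :
    extMap (n + 1) (LinearMap.id - c.smulRight e) (wedge (n + 1) v) = wedge (n + 1) v -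
      ∑ k, c (v k) • (-1 : ℤ) ^ (k : ℕ) • wedge (n + 1) (Fin.cons e (k.removeNth v)) := by
  rw [extMap_wedge]
  refine (alternatingMap_sub_smul _ v (c ∘ v) e).trans ?_
  simp only [alternatingMap_update, Function.comp_apply]

variable {P M : Type*} [CommRing P] [Algebra A P] [AddCommGroup M] [Module P M] [Module A M]

/-- An operator `δ` on a `P`-module `M` behaves like the quotient upon division by `ι e`, where
`c x` is the coefficient of `e` in `x`. The model case is `M = A[X]` with `ι e` a variable. -/
def IsDivision (ι : L →ₗ[A] P) (e : L) (c : Module.Dual A L) (δ : Module.End A M) : Prop :=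
  ∀ (x : L) (y : M), δ (ι x • y) = c x • (y - ι e • δ y) + ι x • δ y

theorem IsDivision.finsupp {ι : L →ₗ[A] P} {e : L} {c : Module.Dual A L} {δ : Module.End A M}
    (hδ : IsDivision ι e c δ) (I : Type*) :
    IsDivision ι e c (Finsupp.mapRange.linearMap (α := I) δ) :=
  fun x y ↦ Finsupp.ext fun i ↦ by simpa using hδ x (y i)

variable (M) in
/-- The operator `v ⊗ y ↦ (e ∧ v) ⊗ δ y`, which contracts the Koszul complex onto the image of
`remainder`. -/
noncomputable def homotopy (e : L) (δ : Module.End A M) (n : ℕ) :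
    ExtPow A L n ⊗[A] M →ₗ[A] ExtPow A L (n + 1) ⊗[A] M :=
  TensorProduct.map (extLift ((wedge (n + 1)).curryLeft e)) δ

theorem homotopy_wedge_tmul (e : L) (δ : Module.End A M) {n : ℕ} (v : Fin n → L) (y : M) :
    homotopy M e δ n (wedge n v ⊗ₜ[A] y) = wedge (n + 1) (Fin.cons e v) ⊗ₜ[A] δ y := by
  rw [homotopy, TensorProduct.map_tmul, extLift_wedge]
  rfl

variable [IsScalarTower A P M]

/-- The operator `v₁ ∧ … ∧ vₙ ⊗ y ↦ v₁' ∧ … ∧ vₙ' ⊗ y'` on the Koszul complex, where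
`x' = x - c x • e` removes the coordinate along `e` and `y' = y - ι e • δ y` is the remainder upon
division by `ι e`. -/
noncomputable def remainder (ι : L →ₗ[A] P) (e : L) (c : Module.Dual A L) (δ : Module.End A M)
    (n : ℕ) : ExtPow A L n ⊗[A] M →ₗ[A] ExtPow A L n ⊗[A] M :=
  TensorProduct.map (extMap n (LinearMap.id - c.smulRight e))
    (LinearMap.id - Algebra.lsmul A A M (ι e) ∘ₗ δ)

theorem remainder_wedge_tmul (ι : L →ₗ[A] P) (e : L) (c : Module.Dual A L)
    (δ : Module.End A M) {n : ℕ} (v : Fin n → L) (y : M) :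
    remainder ι e c δ n (wedge n v ⊗ₜ[A] y) =
      wedge n (fun k ↦ v k - c (v k) • e) ⊗ₜ[A] (y - ι e • δ y) := by
  rw [remainder, TensorProduct.map_tmul, extMap_wedge]
  rfl

variable {ι : L →ₗ[A] P} {e : L} {c : Module.Dual A L} {δ : Module.End A M}

theorem differential_homotopy_wedge_tmul (ι : L →ₗ[A] P) (e : L) (δ : Module.End A M) {n : ℕ}
    (v : Fin (n + 1) → L) (y : M) :
    differential ι M (n + 1) (homotopy M e δ (n + 1) (wedge (n + 1) v ⊗ₜ[A] y)) =
      wedge (n + 1) v ⊗ₜ[A] (ι e • δ y) -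
        ∑ k : Fin (n + 1), (-1 : ℤ) ^ (k : ℕ) •
          (wedge (n + 1) (Fin.cons e (k.removeNth v)) ⊗ₜ[A] (ι (v k) • δ y)) := by
  have removeNth_cons (k : Fin (n + 1)) :
      k.succ.removeNth (Fin.cons e v : Fin (n + 2) → L) = Fin.cons e (k.removeNth v) := by
    ext j
    refine Fin.cases ?_ (fun _ ↦ ?_) j <;> simp [Fin.removeNth]
  have removeNth_zero_cons : (0 : Fin (n + 2)).removeNth (Fin.cons e v : Fin (n + 2) → L) = v := by
    ext j
    simp [Fin.removeNth]
  rw [homotopy_wedge_tmul, differential_wedge_tmul, Fin.sum_univ_succ, removeNth_zero_cons]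
  simp only [removeNth_cons, Fin.cons_zero, Fin.cons_succ, Fin.val_zero, Fin.val_succ, pow_zero,
    one_smul, pow_succ, mul_neg, mul_one, neg_smul, Finset.sum_neg_distrib, sub_eq_add_neg]

theorem homotopy_differential_wedge_tmul (hδ : IsDivision ι e c δ) {n : ℕ}
    (v : Fin (n + 1) → L) (y : M) :
    homotopy M e δ n (differential ι M n (wedge (n + 1) v ⊗ₜ[A] y)) =
      (wedge (n + 1) v - extMap (n + 1) (LinearMap.id - c.smulRight e) (wedge (n + 1) v)) ⊗ₜ[A]
        (y - ι e • δ y) +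
        ∑ k : Fin (n + 1), (-1 : ℤ) ^ (k : ℕ) •
          (wedge (n + 1) (Fin.cons e (k.removeNth v)) ⊗ₜ[A] (ι (v k) • δ y)) := by
  rw [differential_wedge_tmul, map_sum, extMap_id_sub_smulRight_wedge, sub_sub_cancel,
    TensorProduct.sum_tmul, ← Finset.sum_add_distrib]
  refine Finset.sum_congr rfl fun k _ ↦ ?_
  rw [map_zsmul, homotopy_wedge_tmul, hδ, TensorProduct.tmul_add, smul_add,
    TensorProduct.smul_tmul, TensorProduct.smul_tmul']

theorem differential_comp_homotopy_add (hδ : IsDivision ι e c δ) (n : ℕ) :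
    differential ι M (n + 1) ∘ₗ homotopy M e δ (n + 1) + homotopy M e δ n ∘ₗ differential ι M n =
      LinearMap.id - remainder ι e c δ (n + 1) := by
  refine hom_ext fun v y ↦ ?_
  have remainder_eq : remainder ι e c δ (n + 1) (wedge (n + 1) v ⊗ₜ[A] y) =
      extMap (n + 1) (LinearMap.id - c.smulRight e) (wedge (n + 1) v) ⊗ₜ[A] (y - ι e • δ y) := rfl
  simp only [LinearMap.add_apply, LinearMap.comp_apply, LinearMap.sub_apply, LinearMap.id_apply,
    differential_homotopy_wedge_tmul, homotopy_differential_wedge_tmul hδ, remainder_eq,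
    TensorProduct.sub_tmul, TensorProduct.tmul_sub]
  abel

theorem sub_remainder_mem_range (hδ : IsDivision ι e c δ) {n : ℕ} {z : ExtPow A L (n + 1) ⊗[A] M}
    (hz : differential ι M n z = 0) :
    z - remainder ι e c δ (n + 1) z ∈ LinearMap.range (differential ι M (n + 1)) := by
  have := LinearMap.congr_fun (differential_comp_homotopy_add hδ n) z
  rw [LinearMap.add_apply, LinearMap.comp_apply, LinearMap.comp_apply, hz, map_zero,
    add_zero] at this
  exact ⟨_, this⟩

theorem differential_remainder_eq_zero (hδ : IsDivision ι e c δ) {n : ℕ}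
    {z : ExtPow A L (n + 1) ⊗[A] M} (hz : differential ι M n z = 0) :
    differential ι M n (remainder ι e c δ (n + 1) z) = 0 := by
  obtain ⟨w, hw⟩ := sub_remainder_mem_range hδ hz
  have d_d := LinearMap.congr_fun (differential_comp_differential ι M n) w
  rw [LinearMap.comp_apply, hw, map_sub, hz, zero_sub] at d_d
  exact neg_eq_zero.1 d_d

end Homotopy

section Exactness

variable {A σ : Type*} [CommRing A]

/-- The map `ι` of the Koszul complex of the polynomial ring, which sends the basis vectors of the
free module to the variables. -/
noncomputable abbrev vars (A σ : Type*) [CommRing A] : (σ →₀ A) →ₗ[A] MvPolynomial σ A :=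
  Finsupp.linearCombination A X

section

variable (M : Type*) [AddCommGroup M] [Module A M]

/-- The part of `⋀ⁿ L ⊗ M`, with `L` free on `σ`, that only involves the basis vectors of `L`
indexed by `s`. -/
noncomputable def supported (s : Set σ) (n : ℕ) : Submodule A (ExtPow A (σ →₀ A) n ⊗[A] M) :=
  Submodule.span A (Set.image2 (fun v (y : M) ↦ wedge n v ⊗ₜ[A] y)
    {v | ∀ k, v k ∈ Finsupp.supported A A s} Set.univ)

theorem supported_mono {s t : Set σ} (h : s ⊆ t) (n : ℕ) :
    supported (A := A) M s n ≤ supported M t n :=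
  Submodule.span_mono <| Set.image2_subset_right fun _ hv k ↦ Finsupp.supported_mono h (hv k)

theorem supported_empty (n : ℕ) : supported (A := A) M (∅ : Set σ) (n + 1) = ⊥ := by
  rw [supported, Submodule.span_eq_bot]
  rintro _ ⟨v, hv, y, -, rfl⟩
  have v_zero : v 0 = 0 := by simpa [Finsupp.supported_empty] using hv 0
  change wedge (n + 1) v ⊗ₜ[A] y = 0
  rw [AlternatingMap.map_coord_zero _ 0 v_zero, TensorProduct.zero_tmul]

variable {M}

theorem exists_mem_supported {n : ℕ} (z : ExtPow A (σ →₀ A) n ⊗[A] M) :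
    ∃ s : Finset σ, z ∈ supported M (s : Set σ) n := by
  classical
  have hz : z ∈ (⊤ : Submodule A (ExtPow A (σ →₀ A) n ⊗[A] M)) := Submodule.mem_top
  rw [← span_wedge_tmul] at hz
  induction hz using Submodule.span_induction with
  | mem z hz =>
    obtain ⟨v, -, y, -, rfl⟩ := hz
    refine ⟨Finset.univ.biUnion fun k ↦ (v k).support, Submodule.subset_span
      ⟨v, fun k ↦ ?_, y, Set.mem_univ y, rfl⟩⟩
    rw [Finsupp.mem_supported, Finset.coe_subset]
    exact Finset.subset_biUnion_of_mem (fun k ↦ (v k).support) (Finset.mem_univ k)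
  | zero => exact ⟨∅, zero_mem _⟩
  | add z w _ _ hz hw =>
    obtain ⟨s, hs⟩ := hz
    obtain ⟨t, ht⟩ := hw
    refine ⟨s ∪ t, add_mem (supported_mono M ?_ n hs) (supported_mono M ?_ n ht)⟩ <;> simp
  | smul a z _ hz =>
    obtain ⟨s, hs⟩ := hz
    exact ⟨s, Submodule.smul_mem _ a hs⟩

theorem sub_smul_single_mem_supported {α : σ} {s : Set σ} {x : σ →₀ A}
    (hx : x ∈ Finsupp.supported A A (insert α s)) :
    x - x α • Finsupp.single α 1 ∈ Finsupp.supported A A s := by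
  classical
  rw [Finsupp.mem_supported'] at hx ⊢
  intro β hβ
  obtain rfl | hβα := eq_or_ne β α
  · simp
  · simp [hx β (by simp [hβ, hβα]), Finsupp.single_eq_of_ne hβα]

end

variable {P M : Type*} [CommRing P] [Algebra A P] [AddCommGroup M] [Module P M] [Module A M]
  [IsScalarTower A P M] {ι : (σ →₀ A) →ₗ[A] P}

theorem remainder_mem_supported {α : σ} {δ : Module.End A M} {s : Set σ} {n : ℕ}
    {z : ExtPow A (σ →₀ A) n ⊗[A] M} (hz : z ∈ supported M (insert α s) n) :
    remainder ι (Finsupp.single α 1) (Finsupp.lapply α) δ n z ∈ supported M s n := by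
  refine Submodule.span_le (p := (supported M s n).comap (remainder ι _ _ δ n)).2 ?_ hz
  rintro _ ⟨v, hv, y, -, rfl⟩
  rw [SetLike.mem_coe, Submodule.mem_comap, remainder_wedge_tmul]
  exact Submodule.subset_span
    (Set.mem_image2_of_mem (fun k ↦ sub_smul_single_mem_supported (hv k)) (Set.mem_univ _))

theorem mem_range_differential_of_mem_supported {δ : σ → Module.End A M}
    (hδ : ∀ α, IsDivision ι (Finsupp.single α 1) (Finsupp.lapply α) (δ α)) {n : ℕ} (s : Finset σ)
    {z : ExtPow A (σ →₀ A) (n + 1) ⊗[A] M} (hzs : z ∈ supported M (s : Set σ) (n + 1))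
    (hz : differential ι M n z = 0) : z ∈ LinearMap.range (differential ι M (n + 1)) := by
  classical
  induction s using Finset.induction_on generalizing z with
  | empty =>
    rw [Finset.coe_empty, supported_empty, Submodule.mem_bot] at hzs
    exact hzs ▸ zero_mem _
  | insert α s _ ih =>
    rw [Finset.coe_insert] at hzs
    rw [← sub_add_cancel z (remainder ι _ _ (δ α) (n + 1) z)]
    exact add_mem (sub_remainder_mem_range (hδ α) hz)
      (ih (remainder_mem_supported hzs) (differential_remainder_eq_zero (hδ α) hz))

theorem exact_differential_of_isDivision {δ : σ → Module.End A M}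
    (hδ : ∀ α, IsDivision ι (Finsupp.single α 1) (Finsupp.lapply α) (δ α)) (n : ℕ) :
    Function.Exact (differential ι M (n + 1)) (differential ι M n) := by
  rw [exact_differential_iff]
  intro z hz
  obtain ⟨s, hzs⟩ := exists_mem_supported z
  exact mem_range_differential_of_mem_supported hδ s hzs hz

/-- The quotient of a polynomial upon division by `X α`. -/
noncomputable def divX (α : σ) : Module.End A (MvPolynomial σ A) where
  toFun f := f.divMonomial (Finsupp.single α 1)
  map_add' f g := add_divMonomial _ _ _
  map_smul' a f := by ext; simp

theorem divX_X_mul_self (α : σ) (f : MvPolynomial σ A) : divX α (X α * f) = f :=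
  X_mul_divMonomial _ _

theorem divX_X_mul_of_ne {α β : σ} (h : β ≠ α) (f : MvPolynomial σ A) :
    divX α (X β * f) = X β * divX α f := by
  classical
  ext m
  simp only [divX, LinearMap.coe_mk, AddHom.coe_mk, coeff_divMonomial, coeff_X_mul',
    Finsupp.mem_support_iff, Finsupp.add_apply, Finsupp.single_eq_of_ne h, zero_add]
  split_ifs with hm
  · rw [add_tsub_assoc_of_le (by simpa [Finsupp.single_le_iff, Nat.one_le_iff_ne_zero] using hm)]
  · rfl

theorem isDivision_divX (α : σ) :
    IsDivision (vars A σ) (Finsupp.single α 1) (Finsupp.lapply α) (divX α) := by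
  intro x f
  induction x using Finsupp.induction_linear with
  | zero => simp
  | add x y hx hy =>
    simp only [map_add, add_smul, hx, hy]
    abel
  | single β a =>
    obtain rfl | h := eq_or_ne β α
    · simp [divX_X_mul_self, smul_sub]
    · simp [divX_X_mul_of_ne h, h]

theorem exact_differential_of_projective [Module (MvPolynomial σ A) M]
    [IsScalarTower A (MvPolynomial σ A) M] [Module.Projective (MvPolynomial σ A) M] (n : ℕ) :
    Function.Exact (differential (vars A σ) M (n + 1)) (differential (vars A σ) M n) := by
  obtain ⟨s, hs⟩ := Module.projective_def'.1 ‹Module.Projective (MvPolynomial σ A) M›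
  exact exact_differential_of_leftInverse (vars A σ) hs
    (exact_differential_of_isDivision (fun α ↦ (isDivision_divX α).finsupp M) n)

end Exactness

section Augmentation

section

variable {A L P M N : Type*} [CommRing A] [AddCommGroup L] [Module A L] [CommRing P] [Algebra A P]
  [AddCommGroup M] [Module A M] [Module P M] [IsScalarTower A P M]
  [AddCommGroup N] [Module A N] [Module P N] [IsScalarTower A P N]

variable (A L M) in
/-- The identification of `⋀⁰ L ⊗ M` with `M`. -/
noncomputable def zeroTmulEquiv : ExtPow A L 0 ⊗[A] M ≃ₗ[A] M :=
  TensorProduct.congr (exteriorPower.zeroEquiv A L) (LinearEquiv.refl A M) ≪≫ₗ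
    TensorProduct.lid A M

@[simp]
theorem zeroTmulEquiv_wedge_tmul (v : Fin 0 → L) (y : M) :
    zeroTmulEquiv A L M (wedge 0 v ⊗ₜ[A] y) = y := by
  have zeroEquiv_wedge : exteriorPower.zeroEquiv A L (wedge 0 v) = 1 :=
    exteriorPower.zeroEquiv_ιMulti v
  refine (congrArg (fun a : A ↦ a • y) zeroEquiv_wedge).trans (one_smul A y)

theorem zeroTmulEquiv_differential_wedge_tmul (ι : L →ₗ[A] P) (v : Fin 1 → L) (y : M) :
    zeroTmulEquiv A L M (differential ι M 0 (wedge 1 v ⊗ₜ[A] y)) = ι (v 0) • y := by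
  simp [differential_wedge_tmul]

theorem span_smul_top_restrictScalars_le {s : Set P} {W : Submodule A M}
    (hs : ∀ p ∈ s, ∀ y : M, p • y ∈ W) :
    (Ideal.span s • (⊤ : Submodule P M)).restrictScalars A ≤ W := by
  intro y hy
  rw [Submodule.restrictScalars_mem] at hy
  refine Submodule.smul_induction_on hy (fun p hp y _ ↦ ?_) fun _ _ ↦ add_mem
  induction hp using Submodule.span_induction generalizing y with
  | mem p hp => exact hs p hp y
  | zero =>
    rw [zero_smul]
    exact zero_mem W
  | add p q _ _ hp hq =>
    rw [add_smul]
    exact add_mem (hp y trivial) (hq y trivial)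
  | smul q p _ hp =>
    rw [smul_eq_mul, mul_comm, mul_smul]
    exact hp (q • y) trivial

variable (M) in
theorem map_zeroTmulEquiv_range_differential (ι : L →ₗ[A] P) :
    (LinearMap.range (differential ι M 0)).map (zeroTmulEquiv A L M).toLinearMap =
      (Ideal.span (Set.range ι) • (⊤ : Submodule P M)).restrictScalars A := by
  apply le_antisymm
  · rw [← LinearMap.range_comp, LinearMap.range_eq_map, ← span_wedge_tmul, Submodule.map_span_le]
    rintro _ ⟨v, -, y, -, rfl⟩
    change zeroTmulEquiv A L M (differential ι M 0 (wedge 1 v ⊗ₜ[A] y)) ∈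
      Ideal.span (Set.range ι) • (⊤ : Submodule P M)
    rw [zeroTmulEquiv_differential_wedge_tmul]
    exact Submodule.smul_mem_smul (Ideal.subset_span (Set.mem_range_self _)) Submodule.mem_top
  · refine span_smul_top_restrictScalars_le ?_
    rintro _ ⟨x, rfl⟩ y
    exact ⟨differential ι M 0 (wedge 1 (fun _ ↦ x) ⊗ₜ[A] y), LinearMap.mem_range_self _ _,
      zeroTmulEquiv_differential_wedge_tmul ι (fun _ ↦ x) y⟩

variable (A L) in
/-- The extension of a `P`-linear map `M → N` to the degree zero part `⋀⁰ L ⊗ M` of the Koszul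
complex. -/
noncomputable def augmentation (f : M →ₗ[P] N) : ExtPow A L 0 ⊗[A] M →ₗ[A] N :=
  f.restrictScalars A ∘ₗ (zeroTmulEquiv A L M).toLinearMap

@[simp]
theorem augmentation_wedge_tmul (f : M →ₗ[P] N) (v : Fin 0 → L) (y : M) :
    augmentation A L f (wedge 0 v ⊗ₜ[A] y) = f y := by
  simp [augmentation]

theorem augmentation_surjective {f : M →ₗ[P] N} (hf : Function.Surjective f) :
    Function.Surjective (augmentation A L f) :=
  hf.comp (zeroTmulEquiv A L M).surjective

theorem ker_augmentation {ι : L →ₗ[A] P} {f : M →ₗ[P] N}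
    (hf : LinearMap.ker f = Ideal.span (Set.range ι) • ⊤) :
    LinearMap.ker (augmentation A L f) = LinearMap.range (differential ι M 0) := by
  rw [augmentation, LinearMap.ker_comp, LinearMap.ker_restrictScalars, hf,
    ← map_zeroTmulEquiv_range_differential, Submodule.comap_map_eq_of_injective
    (zeroTmulEquiv A L M).injective]

end

section

variable {R N : Type*} [CommRing R] [AddCommGroup N] [Module R N] {n : N}
  (hn : Function.Surjective (LinearMap.toSpanSingleton R N n))
  (M : Type*) [AddCommGroup M] [Module R M]

theorem tensorProductMk_eq_congr_comp :
    TensorProduct.mk R N M n =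
      (TensorProduct.congr ((LinearMap.toSpanSingleton R N n).quotKerEquivOfSurjective hn)
        (LinearEquiv.refl R M)).toLinearMap ∘ₗ TensorProduct.mk R (R ⧸ _) M 1 := by
  ext y
  have map_one : (LinearMap.toSpanSingleton R N n).quotKerEquivOfSurjective hn 1 = n := one_smul R n
  simp [map_one]

include hn

theorem tensorProductMk_surjective_of_generator :
    Function.Surjective (TensorProduct.mk R N M n) := by
  rw [tensorProductMk_eq_congr_comp hn, LinearMap.coe_comp, LinearEquiv.coe_coe,
    EquivLike.comp_surjective]
  exact TensorProduct.mk_surjective R M _ Ideal.Quotient.mk_surjective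

theorem ker_tensorProductMk_of_generator :
    LinearMap.ker (TensorProduct.mk R N M n) =
      LinearMap.ker (LinearMap.toSpanSingleton R N n) • (⊤ : Submodule R M) := by
  rw [tensorProductMk_eq_congr_comp hn, LinearEquiv.ker_comp, LinearMap.ker_tensorProductMk]

end

theorem span_range_vars (A σ : Type*) [CommRing A] :
    Ideal.span (Set.range (vars A σ)) = idealOfVars σ A := by
  rw [Ideal.span, ← LinearMap.coe_range, Finsupp.range_linearCombination,
    Submodule.span_span_of_tower]

theorem ker_aeval_zero (A σ : Type*) [CommRing A] :
    RingHom.ker (aeval (0 : σ → A) : MvPolynomial σ A →ₐ[A] A) = idealOfVars σ A := by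
  ext p
  rw [RingHom.mem_ker, ← pow_one (idealOfVars σ A), mem_pow_idealOfVars_iff', aeval_zero]
  simp [Finsupp.degree_eq_zero_iff, constantCoeff_eq]

section

variable (A σ : Type u) [CommRing A]

/-- The identity map from `A` to its type synonym `EvalZero A σ`. -/
def toEvalZero : A ≃+ EvalZero A σ := AddEquiv.refl A

variable {A} in
theorem smul_toEvalZero (p : MvPolynomial σ A) (a : A) :
    p • toEvalZero A σ a = toEvalZero A σ (aeval (0 : σ → A) p * a) := rfl

theorem toSpanSingleton_toEvalZero_one_surjective :
    Function.Surjective (LinearMap.toSpanSingleton (MvPolynomial σ A) _ (toEvalZero A σ 1)) := by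
  intro b
  obtain ⟨a, rfl⟩ := (toEvalZero A σ).surjective b
  exact ⟨C a, by simp [smul_toEvalZero]⟩

theorem ker_toSpanSingleton_toEvalZero_one :
    LinearMap.ker (LinearMap.toSpanSingleton (MvPolynomial σ A) _ (toEvalZero A σ 1)) =
      Ideal.span (Set.range (vars A σ)) := by
  rw [span_range_vars, ← ker_aeval_zero]
  ext p
  rw [LinearMap.mem_ker, LinearMap.toSpanSingleton_apply, smul_toEvalZero, mul_one,
    map_eq_zero_iff _ (toEvalZero A σ).injective, RingHom.mem_ker]

end

end Augmentation

section DimensionShifting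

open CategoryTheory Limits

universe v₁ v₂ u₁ u₂

variable {C : Type u₁} [Category.{v₁} C] [Abelian C] {D : Type u₂} [Category.{v₂} D] [Abelian D]

section

variable (K : ChainComplex C ℕ) (n : ℕ)

theorem fromOpcycles_pOpcycles : K.fromOpcycles (n + 1) n ≫ K.pOpcycles n = 0 := by
  rw [← cancel_epi (K.pOpcycles (n + 1))]
  simp

theorem exact_fromOpcycles_pOpcycles :
    (ShortComplex.mk _ _ (fromOpcycles_pOpcycles K n)).Exact := by
  let φ : ShortComplex.mk _ _ (K.d_pOpcycles (n + 1) n) ⟶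
      ShortComplex.mk _ _ (fromOpcycles_pOpcycles K n) :=
    { τ₁ := K.pOpcycles (n + 1), τ₂ := 𝟙 _, τ₃ := 𝟙 _ }
  have : Epi φ.τ₁ := inferInstanceAs (Epi (K.pOpcycles (n + 1)))
  have : IsIso φ.τ₂ := inferInstanceAs (IsIso (𝟙 _))
  have : Mono φ.τ₃ := inferInstanceAs (Mono (𝟙 _))
  exact (ShortComplex.exact_iff_of_epi_of_isIso_of_mono φ).1 <|
    ShortComplex.exact_of_g_is_cokernel _ (K.opcyclesIsCokernel (n + 1) n (by simp))

variable {K n} in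
theorem shortExact_opcycles (hK : K.ExactAt (n + 1)) :
    (ShortComplex.mk _ _ (fromOpcycles_pOpcycles K n)).ShortExact where
  exact := exact_fromOpcycles_pOpcycles K n
  mono_f := Preadditive.mono_of_isZero_kernel' _ (K.homologyIsKernel (n + 1) n (by simp))
    hK.isZero_homology
  epi_g := inferInstanceAs (Epi (K.pOpcycles n))

end

section

variable {S : ShortComplex (ChainComplex D ℕ)} (hS : S.ShortExact)

/-- The connecting isomorphism of a short exact sequence of complexes with acyclic middle term. -/
noncomputable def connectingIso (n : ℕ) (h₁ : S.X₂.ExactAt (n + 1)) (h₂ : S.X₂.ExactAt n) :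
    S.X₃.homology (n + 1) ≅ S.X₁.homology n :=
  have : Mono (hS.δ (n + 1) n rfl) :=
    (hS.homology_exact₃ (n + 1) n rfl).mono_g (h₁.isZero_homology.eq_of_src _ _)
  have : Epi (hS.δ (n + 1) n rfl) :=
    (hS.homology_exact₁ (n + 1) n rfl).epi_f (h₂.isZero_homology.eq_of_tgt _ _)
  have := isIso_of_mono_of_epi (hS.δ (n + 1) n rfl)
  asIso (hS.δ (n + 1) n rfl)

/-- The first homology of the third term of a short exact sequence of complexes, as a kernel on the
zeroth homology of the first one, when the middle term has no first homology. -/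
noncomputable def connectingKernelIso (h : S.X₂.ExactAt 1) :
    S.X₃.homology 1 ≅ kernel (HomologicalComplex.homologyMap S.f 0) :=
  have : Mono (ShortComplex.mk _ _ (hS.δ_comp 1 0 rfl)).f :=
    (hS.homology_exact₃ 1 0 rfl).mono_g (h.isZero_homology.eq_of_src _ _)
  (hS.homology_exact₁ 1 0 rfl).fIsKernel.conePointUniqueUpToIso (limit.isLimit _)

end

section

variable (F : C ⥤ D) [F.Additive] [PreservesFiniteColimits F] (K : ChainComplex C ℕ) (n : ℕ)

/-- A right exact functor commutes with opcycles. -/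
noncomputable def mapOpcyclesIso :
    ((F.mapHomologicalComplex _).obj K).opcycles n ≅ F.obj (K.opcycles n) :=
  (((F.mapHomologicalComplex _).obj K).opcyclesIsCokernel _ n rfl).coconePointUniqueUpToIso
    (CokernelCofork.mapIsColimit _ (K.opcyclesIsCokernel _ n rfl) F)

theorem pOpcycles_mapOpcyclesIso_hom :
    ((F.mapHomologicalComplex _).obj K).pOpcycles n ≫ (mapOpcyclesIso F K n).hom =
      F.map (K.pOpcycles n) :=
  (((F.mapHomologicalComplex _).obj K).opcyclesIsCokernel _ n rfl).comp_coconePointUniqueUpToIso_hom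
    (CokernelCofork.mapIsColimit _ (K.opcyclesIsCokernel _ n rfl) F) WalkingParallelPair.one

theorem mapOpcyclesIso_hom_map_fromOpcycles (m : ℕ) :
    (mapOpcyclesIso F K n).hom ≫ F.map (K.fromOpcycles n m) =
      ((F.mapHomologicalComplex _).obj K).fromOpcycles n m := by
  let FK := (F.mapHomologicalComplex _).obj K
  have map_d : F.map (K.pOpcycles n) ≫ F.map (K.fromOpcycles n m) = F.map (K.d n m) := by
    rw [← F.map_comp, K.p_fromOpcycles]
  refine (cancel_epi (FK.pOpcycles n)).1 (Eq.trans ?_ (map_d.trans (FK.p_fromOpcycles n m).symm))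
  rw [← Category.assoc, pOpcycles_mapOpcyclesIso_hom]
  rfl

/-- For a right exact functor `F`, the homology of `F(K)` as a kernel on `F` of the opcycles
of `K`. -/
noncomputable def mapHomologyKernelIso :
    ((F.mapHomologicalComplex _).obj K).homology (n + 1) ≅
      kernel (F.map (K.fromOpcycles (n + 1) n)) :=
  (HomologicalComplex.homologyIsKernel _ (n + 1) n (by simp)).conePointUniqueUpToIso
      (limit.isLimit _) ≪≫
    kernel.mapIso _ _ (mapOpcyclesIso F K (n + 1)) (Iso.refl _)
      ((Category.comp_id _).trans (mapOpcyclesIso_hom_map_fromOpcycles F K (n + 1) n).symm)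

end

/-- An exact functor to chain complexes whose values on projective objects are acyclic in positive
degrees. Its homology functors are then the left derived functors of the zeroth one. -/
structure IsDerivedComplex (T : C ⥤ ChainComplex D ℕ) [T.PreservesZeroMorphisms] : Prop where
  map_shortExact {S : ShortComplex C} (hS : S.ShortExact) : (S.map T).ShortExact
  exactAt_succ (Q : C) [Projective Q] (n : ℕ) : (T.obj Q).ExactAt (n + 1)

namespace IsDerivedComplex

variable {T : C ⥤ ChainComplex D ℕ} [T.PreservesZeroMorphisms] (hT : IsDerivedComplex T)
  {F : C ⥤ D} [F.Additive] [PreservesFiniteColimits F]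
  (e : T ⋙ HomologicalComplex.homologyFunctor D _ 0 ≅ F)

include hT e

theorem nonempty_homology_opcycles_iso {K : ChainComplex C ℕ} (hK : ∀ n, K.ExactAt (n + 1))
    (hproj : ∀ n, Projective (K.X n)) (n m k : ℕ) (hk : k = m + n) :
    Nonempty ((T.obj (K.opcycles m)).homology (n + 1) ≅
      ((F.mapHomologicalComplex _).obj K).homology (k + 1)) := by
  have hS (m : ℕ) := hT.map_shortExact (shortExact_opcycles (hK m))
  induction n generalizing m with
  | zero =>
    rw [hk, add_zero]
    exact ⟨connectingKernelIso (hS m) (hT.exactAt_succ (K.X m) 0) ≪≫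
      kernel.mapIso _ _ (e.app _) (e.app _) (e.hom.naturality (K.fromOpcycles (m + 1) m)) ≪≫
      (mapHomologyKernelIso F K m).symm⟩
  | succ n ih =>
    obtain ⟨i⟩ := ih (m + 1) (by lia)
    exact ⟨connectingIso (hS m) (n + 1) (hT.exactAt_succ (K.X m) _) (hT.exactAt_succ (K.X m) _) ≪≫
      i⟩

theorem nonempty_homology_iso_of_resolution {X : C} (R : ProjectiveResolution X) (n : ℕ) :
    Nonempty ((T.obj X).homology (n + 1) ≅
      ((F.mapHomologicalComplex _).obj R.complex).homology (n + 1)) := by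
  obtain ⟨i⟩ := hT.nonempty_homology_opcycles_iso e R.complex_exactAt_succ R.projective n 0 n
    (zero_add n).symm
  let j : X ≅ R.complex.opcycles 0 :=
    R.isColimitCokernelCofork.coconePointUniqueUpToIso
      (R.complex.opcyclesIsCokernel 1 0 (by simp))
  exact ⟨(T ⋙ HomologicalComplex.homologyFunctor D _ (n + 1)).mapIso j ≪≫ i⟩

end IsDerivedComplex

section

variable {C : Type u₁} [Category.{v₁} C] {D : Type u₂} [Category.{v₂} D] [Abelian D]
  {T : C ⥤ ChainComplex D ℕ} {F : C ⥤ D}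
  (α : T ⋙ HomologicalComplex.eval D _ 0 ⟶ F)
  (hα : ∀ X, (T.obj X).d 1 0 ≫ α.app X = 0)
  (hcoker : ∀ X, IsColimit (CokernelCofork.ofπ (α.app X) (hα X)))

/-- A natural cokernel of the first differentials of `T`, as the zeroth opcycles of `T`. -/
noncomputable def opcyclesZeroIso (X : C) : (T.obj X).opcycles 0 ≅ F.obj X :=
  ((T.obj X).opcyclesIsCokernel 1 0 (by simp)).coconePointUniqueUpToIso (hcoker X)

theorem pOpcycles_opcyclesZeroIso_hom (X : C) :
    (T.obj X).pOpcycles 0 ≫ (opcyclesZeroIso α hα hcoker X).hom = α.app X :=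
  ((T.obj X).opcyclesIsCokernel 1 0 (by simp)).comp_coconePointUniqueUpToIso_hom (hcoker X)
    WalkingParallelPair.one

theorem opcyclesZeroIso_hom_naturality {X Y : C} (f : X ⟶ Y) :
    HomologicalComplex.opcyclesMap (T.map f) 0 ≫ (opcyclesZeroIso α hα hcoker Y).hom =
      (opcyclesZeroIso α hα hcoker X).hom ≫ F.map f := by
  rw [← cancel_epi ((T.obj X).pOpcycles 0), HomologicalComplex.p_opcyclesMap_assoc,
    pOpcycles_opcyclesZeroIso_hom, reassoc_of% pOpcycles_opcyclesZeroIso_hom]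
  exact α.naturality f

/-- A natural cokernel of the first differentials of `T`, as the zeroth homology of `T`. -/
noncomputable def homologyZeroIso : T ⋙ HomologicalComplex.homologyFunctor _ _ 0 ≅ F :=
  NatIso.ofComponents
    (fun X ↦ (T.obj X).isoHomologyι 0 _ rfl (by simp) ≪≫ opcyclesZeroIso α hα hcoker X)
    fun {X Y} f ↦ by
      change HomologicalComplex.homologyMap (T.map f) 0 ≫
        HomologicalComplex.homologyι _ 0 ≫ (opcyclesZeroIso α hα hcoker Y).hom =
        (HomologicalComplex.homologyι _ 0 ≫ (opcyclesZeroIso α hα hcoker X).hom) ≫ F.map f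
      rw [HomologicalComplex.homologyι_naturality_assoc, opcyclesZeroIso_hom_naturality,
        Category.assoc]

end

end DimensionShifting

section Functor

open CategoryTheory Limits MonoidalCategory

/-- The `A`-module structure on a module over an `A`-algebra `P`. -/
@[reducible]
noncomputable def restrictModule {A P : Type*} [CommRing A] [CommRing P] [Algebra A P]
    (M : ModuleCat P) : Module A M :=
  Module.compHom M (algebraMap A P)

attribute [local instance] restrictModule

theorem restrictModule_isScalarTower {A P : Type*} [CommRing A] [CommRing P] [Algebra A P]
    (M : ModuleCat P) : IsScalarTower A P M :=
  ⟨fun a p y ↦ by rw [Algebra.smul_def, mul_smul]; rfl⟩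

attribute [local instance] restrictModule_isScalarTower

section

variable {A P : Type u} [CommRing A] [CommRing P] [Algebra A P] {L : Type u} [AddCommGroup L]
  [Module A L] (ι : L →ₗ[A] P)

/-- The Koszul complex `K(L, M)`. -/
noncomputable def complexObj (M : ModuleCat.{u} P) : ChainComplex (ModuleCat.{u} A) ℕ :=
  ChainComplex.of (fun n ↦ ModuleCat.of A (ExtPow A L n ⊗[A] M))
    (fun n ↦ ModuleCat.ofHom (differential ι M n))
    fun n ↦ ModuleCat.hom_ext (differential_comp_differential ι M n)

theorem complexObj_d (M : ModuleCat.{u} P) (n : ℕ) :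
    (complexObj ι M).d (n + 1) n = ModuleCat.ofHom (differential ι M n) :=
  ChainComplex.of_d (fun n ↦ ModuleCat.of A (ExtPow A L n ⊗[A] M))
    (fun n ↦ ModuleCat.ofHom (differential ι M n)) n

/-- The Koszul complex `K(L, M)` as a functor of `M`. -/
noncomputable def complex : ModuleCat.{u} P ⥤ ChainComplex (ModuleCat.{u} A) ℕ where
  obj M := complexObj ι M
  map {M N} f := ChainComplex.ofHom
    (fun n ↦ ModuleCat.ofHom ((f.hom.restrictScalars A).lTensor (ExtPow A L n)))
    fun n ↦ by
      rw [complexObj_d, complexObj_d]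
      exact ModuleCat.hom_ext (lTensor_comp_differential ι f.hom n).symm
  map_id M := by
    ext n : 2
    exact LinearMap.lTensor_id (R := A) _ M
  map_comp f g := by
    ext n : 2
    exact LinearMap.lTensor_comp (R := A) _ (g.hom.restrictScalars A) (f.hom.restrictScalars A)

theorem complex_d (M : ModuleCat.{u} P) (n : ℕ) :
    ((complex ι).obj M).d (n + 1) n = ModuleCat.ofHom (differential ι M n) :=
  complexObj_d ι M n

instance : (complex ι).PreservesZeroMorphisms where
  map_zero M N := by
    ext n : 2
    exact LinearMap.lTensor_zero (R := A) (P := N) (N := M) (ExtPow A L n)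

theorem complex_map_shortExact [∀ n, Module.Flat A (ExtPow A L n)]
    {S : ShortComplex (ModuleCat.{u} P)} (hS : S.ShortExact) :
    (S.map (complex ι)).ShortExact := by
  refine HomologicalComplex.shortExact_of_degreewise_shortExact _ fun n ↦
    ModuleCat.shortComplex_shortExact _ ?_ ?_ ?_
  · exact Module.Flat.lTensor_exact (R := A) (ExtPow A L n)
      (f := S.f.hom.restrictScalars A) (g := S.g.hom.restrictScalars A)
      (ShortComplex.ShortExact.moduleCat_exact_iff_function_exact S |>.mp hS.exact)
  · exact Module.Flat.lTensor_preserves_injective_linearMap (R := A) (M := ExtPow A L n)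
      (S.f.hom.restrictScalars A) hS.moduleCat_injective_f
  · exact LinearMap.lTensor_surjective (R := A) (ExtPow A L n)
      (g := S.g.hom.restrictScalars A) hS.moduleCat_surjective_g

theorem complex_exactAt_succ_iff (M : ModuleCat.{u} P) (n : ℕ) :
    ((complex ι).obj M).ExactAt (n + 1) ↔
      Function.Exact (differential ι M (n + 1)) (differential ι M n) := by
  rw [HomologicalComplex.exactAt_iff' _ (n + 2) (n + 1) n (by simp) (by simp),
    ShortComplex.ShortExact.moduleCat_exact_iff_function_exact]
  change Function.Exact (((complex ι).obj M).d (n + 2) (n + 1))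
    (((complex ι).obj M).d (n + 1) n) ↔ _
  rw [complex_d, complex_d]
  rfl

theorem nonempty_homology_complex_linearEquiv (M : ModuleCat.{u} P) (n : ℕ) :
    Nonempty (((complex ι).obj M).homology (n + 1) ≃ₗ[A] LinearMap.ker (differential ι M n) ⧸
      (LinearMap.range (differential ι M (n + 1))).comap
        (LinearMap.ker (differential ι M n)).subtype) := by
  let K := (complex ι).obj M
  let S := K.sc' (n + 2) (n + 1) n
  have range_f : LinearMap.range S.f.hom = LinearMap.range (differential ι M (n + 1)) :=
    congrArg (fun f ↦ LinearMap.range f.hom) (complex_d ι M (n + 1))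
  have ker_g : LinearMap.ker S.g.hom = LinearMap.ker (differential ι M n) :=
    congrArg (fun f ↦ LinearMap.ker f.hom) (complex_d ι M n)
  rw [← range_f, ← ker_g]
  refine ⟨(K.homologyIsoSc' (n + 2) (n + 1) n (by simp) (by simp) ≪≫
    S.moduleCatHomologyIso).toLinearEquiv ≪≫ₗ Submodule.quotEquivOfEq _ _ ?_⟩
  ext x
  simp only [LinearMap.mem_range, Subtype.ext_iff]
  rfl

variable (N : ModuleCat.{u} P)

variable (A) in
/-- The functor `N ⊗_P -` with values in `A`-modules. -/
noncomputable abbrev tensorRestrict : ModuleCat.{u} P ⥤ ModuleCat.{u} A :=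
  (tensoringLeft _).obj N ⋙ ModuleCat.restrictScalars (algebraMap A P)

instance : PreservesFiniteColimits ((tensoringLeft (ModuleCat.{u} P)).obj N) :=
  inferInstanceAs (PreservesFiniteColimits (tensorLeft N))

variable {N} (c : N) (M : ModuleCat.{u} P)

/-- The map `y ↦ c ⊗ y`. Its codomain is the tensor product in `ModuleCat P`, which carries the
`A`-module structure `restrictModule`. -/
noncomputable abbrev tensorMk : M →ₗ[P] ↑(N ⊗ M : ModuleCat P) :=
  TensorProduct.mk P N M c

/-- The augmentation `⋀⁰ L ⊗ M ≅ M → N ⊗_P M`, `y ↦ c ⊗ y`. -/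
noncomputable def tensorAugmentation :
    complex ι ⋙ HomologicalComplex.eval _ _ 0 ⟶ tensorRestrict A N where
  app M := ModuleCat.ofHom (augmentation A L (tensorMk c M))
  naturality M M' f := by
    ext1
    refine hom_ext fun v y ↦ ?_
    exact (augmentation_wedge_tmul (tensorMk c M') v (f y)).trans
      (congrArg ((tensorRestrict A N).map f).hom (augmentation_wedge_tmul (tensorMk c M) v y)).symm

variable {c} (hc : Function.Surjective (LinearMap.toSpanSingleton P N c))

include hc

theorem tensorAugmentation_app_surjective :
    Function.Surjective ((tensorAugmentation ι c).app M) :=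
  augmentation_surjective (f := tensorMk c M) (tensorProductMk_surjective_of_generator hc M)

variable {ι}
variable (hι : LinearMap.ker (LinearMap.toSpanSingleton P N c) = Ideal.span (Set.range ι))

include hι

theorem ker_tensorAugmentation_app :
    LinearMap.ker ((tensorAugmentation ι c).app M).hom = LinearMap.range (differential ι M 0) :=
  have ker_augmentation_tensorMk : LinearMap.ker (augmentation A L (tensorMk c M)) =
      LinearMap.range (differential ι M 0) :=
    ker_augmentation ((ker_tensorProductMk_of_generator hc M).trans (congrArg (· • ⊤) hι))
  ker_augmentation_tensorMk

theorem d_comp_tensorAugmentation_app :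
    ((complex ι).obj M).d 1 0 ≫ (tensorAugmentation ι c).app M = 0 := by
  rw [complex_d]
  exact ModuleCat.hom_ext
    (LinearMap.range_le_ker_iff.mp (ker_tensorAugmentation_app M hc hι).ge)

/-- The augmentation is a cokernel of the first differential of the Koszul complex. -/
noncomputable def tensorAugmentationIsCokernel :
    IsColimit (CokernelCofork.ofπ _ (d_comp_tensorAugmentation_app M hc hι)) :=
  let S := ShortComplex.mk _ _ (d_comp_tensorAugmentation_app M hc hι)
  have : Epi S.g := (ModuleCat.epi_iff_surjective _).mpr (tensorAugmentation_app_surjective ι M hc)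
  have exact_S : S.Exact := by
    rw [ShortComplex.moduleCat_exact_iff_range_eq_ker]
    exact (congrArg (fun f ↦ LinearMap.range f.hom) (complex_d ι M 0)).trans
      (ker_tensorAugmentation_app M hc hι).symm
  exact_S.gIsCokernel

end

end Functor

section Tor

open CategoryTheory Limits MonoidalCategory

attribute [local instance] restrictModule restrictModule_isScalarTower

instance {A σ : Type*} [CommRing A] (n : ℕ) : Module.Free A (ExtPow A (σ →₀ A) n) :=
  inferInstanceAs (Module.Free A (⋀[A]^n (σ →₀ A)))

variable (A σ : Type u) [CommRing A]

theorem isDerivedComplex_complex_vars : IsDerivedComplex (complex (vars A σ)) where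
  map_shortExact := complex_map_shortExact _
  exactAt_succ Q _ n := by
    have : Module.Projective (MvPolynomial σ A) Q := inferInstance
    exact (complex_exactAt_succ_iff _ Q n).mpr (exact_differential_of_projective n)

variable (M : ModuleCat.{u} (MvPolynomial σ A))

theorem nonempty_homology_iso_tor (n : ℕ) :
    Nonempty (((complex (vars A σ)).obj M).homology (n + 1) ≅
      (ModuleCat.restrictScalars (algebraMap A (MvPolynomial σ A))).obj
        (((Tor (ModuleCat.{u} (MvPolynomial σ A)) (n + 1)).obj
          (ModuleCat.of (MvPolynomial σ A) (EvalZero A σ))).obj M)) := by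
  let N := ModuleCat.of (MvPolynomial σ A) (EvalZero A σ)
  let G := (tensoringLeft _).obj N
  let R := ModuleCat.restrictScalars (algebraMap A (MvPolynomial σ A))
  let K := (G.mapHomologicalComplex _).obj (projectiveResolution M).complex
  let e := homologyZeroIso (tensorAugmentation (vars A σ) (N := N) (toEvalZero A σ 1)) _
    fun M ↦ tensorAugmentationIsCokernel M (toSpanSingleton_toEvalZero_one_surjective A σ)
      (ker_toSpanSingleton_toEvalZero_one A σ)
  obtain ⟨i⟩ := (isDerivedComplex_complex_vars A σ).nonempty_homology_iso_of_resolution e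
    (projectiveResolution M) n
  exact ⟨i ≪≫ (K.sc (n + 1)).mapHomologyIso R ≪≫
    R.mapIso ((projectiveResolution M).isoLeftDerivedObj G (n + 1)).symm⟩

theorem nonempty_torPoly_zero :
    Nonempty (TorPoly A σ M 0 ≃ₗ[A]
      ((ExtPow A (σ →₀ A) 0 ⊗[A] M) ⧸ LinearMap.range (differential (vars A σ) M 0))) := by
  let N := ModuleCat.of (MvPolynomial σ A) (EvalZero A σ)
  let G := (tensoringLeft _).obj N
  let R := ModuleCat.restrictScalars (algebraMap A (MvPolynomial σ A))
  let ε := (tensorAugmentation (vars A σ) (N := N) (toEvalZero A σ 1)).app M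
  have hN := toSpanSingleton_toEvalZero_one_surjective A σ
  have ε_surjective : Function.Surjective ε := tensorAugmentation_app_surjective _ M hN
  have ker_ε : LinearMap.ker ε.hom = LinearMap.range (differential (vars A σ) M 0) :=
    ker_tensorAugmentation_app M hN (ker_toSpanSingleton_toEvalZero_one A σ)
  exact ⟨(R.mapIso (G.leftDerivedZeroIsoSelf.app M)).toLinearEquiv ≪≫ₗ
    (ε.hom.quotKerEquivOfSurjective ε_surjective).symm ≪≫ₗ Submodule.quotEquivOfEq _ _ ker_ε⟩

theorem nonempty_torPoly_succ (n : ℕ) :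
    Nonempty (TorPoly A σ M (n + 1) ≃ₗ[A] LinearMap.ker (differential (vars A σ) M n) ⧸
      (LinearMap.range (differential (vars A σ) M (n + 1))).comap
        (LinearMap.ker (differential (vars A σ) M n)).subtype) := by
  obtain ⟨i⟩ := nonempty_homology_iso_tor A σ M n
  obtain ⟨j⟩ := nonempty_homology_complex_linearEquiv (vars A σ) M n
  exact ⟨i.symm.toLinearEquiv ≪≫ₗ j⟩

end Tor

end Koszul

/-- Let `A` be a commutative ring, `σ` a type, `P = A[Xα : α ∈ σ]` the
polynomial ring, `L` the free `A`-module on `σ` and `ι : L → P` the `A`-linear map sending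
the basis vector `eα` to `Xα`.  For a `P`-module `M`, let `K(L, M)` be the complex with
terms `K(L,M)ᵢ = ⋀ᴬⁱ L ⊗_A M` and differential determined on generators by
`∂((x₁∧…∧xᵢ) ⊗ y) = Σₖ (−1)^{k+1} (x₁∧…∧x̂ₖ∧…∧xᵢ) ⊗ ι(xₖ)·y`.
Then for every `i ≥ 0` there is an isomorphism of `A`-modules
`Tor_i^P(A, M) ≅ H_i(K(L, M))`, where `A` is a `P`-module via evaluation at `0`. -/
theorem tor_iso_koszul_homology
    (A : Type u) [CommRing A] (σ : Type u) (M : Type u)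
    [AddCommGroup M] [Module (MvPolynomial σ A) M]
    [Module A M] [IsScalarTower A (MvPolynomial σ A) M]
    (dK : ∀ i : ℕ,
      (ExtPow A (σ →₀ A) (i+1) ⊗[A] M) →ₗ[A] (ExtPow A (σ →₀ A) i ⊗[A] M))
    (hdK : ∀ (i : ℕ) (x : Fin (i+1) → (σ →₀ A)) (y : M),
      dK i (wedgeGen A (σ →₀ A) (i+1) x ⊗ₜ[A] y) =
        ∑ k : Fin (i+1), (-1 : ℤ) ^ (k : ℕ) •
          (wedgeGen A (σ →₀ A) i (x ∘ k.succAbove) ⊗ₜ[A]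
            (Finsupp.linearCombination A (fun α => (MvPolynomial.X α : MvPolynomial σ A)) (x k) • y))) :
    Nonempty (TorPoly A σ M 0 ≃ₗ[A]
        ((ExtPow A (σ →₀ A) 0 ⊗[A] M) ⧸ LinearMap.range (dK 0))) ∧
      ∀ i : ℕ, Nonempty (TorPoly A σ M (i+1) ≃ₗ[A]
        (↥(LinearMap.ker (dK i)) ⧸
          Submodule.comap (LinearMap.ker (dK i)).subtype (LinearMap.range (dK (i+1))))) := by
  obtain rfl : dK = Koszul.differential (Koszul.vars A σ) M := by
    ext1 i
    refine Koszul.hom_ext fun v y ↦ ?_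
    rw [Koszul.differential_wedge_tmul]
    exact hdK i v y
  obtain rfl : ‹Module A M› = Koszul.restrictModule (ModuleCat.of (MvPolynomial σ A) M) :=
    Module.ext' _ _ fun a y ↦ (algebraMap_smul (MvPolynomial σ A) a y).symm
  exact ⟨Koszul.nonempty_torPoly_zero A σ (ModuleCat.of _ M),
    Koszul.nonempty_torPoly_succ A σ (ModuleCat.of _ M)⟩
end

section
/- Let A be a commutative ring, Φ a type, P = A[X_α : α ∈ Φ] the polynomial ring, a : Φ → A a function, and 𝔥 the ideal of P generated by the elements X_α − a_α. Then for every s ≥ 0, the ideal power 𝔥^s, regarded as an A-module via the structural inclusion A → P, is a projective A-module. -/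
/-!
The translation `X α ↦ X α - a α` is an `A`-algebra automorphism of `A[X_α : α ∈ Φ]`, and it
carries the ideal of variables onto the ideal generated by the `X α - a α`, hence powers onto
powers. The `s`-th power of the ideal of variables is free over `A`, with basis the monomials of
degree at least `s`.
-/

open MvPolynomial

/-- The `R`-linear isomorphism from an ideal onto its image that an isomorphism of `R`-algebras
restricts to. It transports module properties over the base `R` between the two ideals. -/
noncomputable def idealMapLinearEquiv {R S T : Type*} [CommSemiring R] [Semiring S] [Semiring T]
    [Algebra R S] [Algebra R T] (e : S ≃ₐ[R] T) (I : Ideal S) : I ≃ₗ[R] I.map e :=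
  e.toLinearEquiv.ofSubmodules (I.restrictScalars R) ((I.map e).restrictScalars R)
    (Submodule.ext fun _ => (Ideal.mem_map_of_equiv e _).symm)

section MonomialIdeal

variable {R σ : Type*} [CommSemiring R]

lemma free_restrictSupportIdeal (s : Set (σ →₀ ℕ)) (hs : IsUpperSet s) :
    Module.Free R (restrictSupportIdeal R s hs) :=
  .of_basis (basisRestrictSupport R s)

lemma free_pow_idealOfVars (n : ℕ) : Module.Free R ↥(idealOfVars σ R ^ n) := by
  rw [pow_idealOfVars]
  exact free_restrictSupportIdeal _ _

end MonomialIdeal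

section Translation

variable {R σ : Type*} [CommRing R]

/-- Translation by `-a`, as an automorphism of the polynomial algebra: it substitutes `X i - a i`
for each variable `X i`. It moves the ideal of the origin to the ideal of the point `a`. -/
noncomputable def translateEquiv (a : σ → R) : MvPolynomial σ R ≃ₐ[R] MvPolynomial σ R :=
  .ofAlgHom (aeval fun i => X i - C (a i)) (aeval fun i => X i + C (a i))
    (by ext i; simp [← algebraMap_eq]) (by ext i; simp [← algebraMap_eq])

lemma translateEquiv_X (a : σ → R) (i : σ) : translateEquiv a (X i) = X i - C (a i) :=
  aeval_X _ i

lemma map_translateEquiv_idealOfVars (a : σ → R) :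
    (idealOfVars σ R).map (translateEquiv a) = Ideal.span (Set.range fun i => X i - C (a i)) := by
  simp only [Ideal.map_span, ← Set.range_comp, Function.comp_def, translateEquiv_X]

theorem ideal_pow_projective_general (a : σ → R) (n : ℕ) :
    Module.Free R ↥(Ideal.span (Set.range fun i => X i - C (a i)) ^ n) := by
  rw [← map_translateEquiv_idealOfVars, ← Ideal.map_pow]
  have := free_pow_idealOfVars (R := R) (σ := σ) n
  exact .of_equiv (idealMapLinearEquiv (translateEquiv a) (idealOfVars σ R ^ n))

end Translation

/-- Let `A` be a commutative ring, `Φ` a type, `P = A[Xα : α ∈ Φ]` the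
polynomial ring, `a : Φ → A` a function, and `𝔥` the ideal of `P` generated by the elements
`Xα − aα`.  Then for every `s ≥ 0`, the ideal power `𝔥^s`, regarded as an `A`-module via the
structural inclusion `A → P`, is a projective `A`-module. -/
theorem ideal_pow_projective
    (A : Type*) [CommRing A] (Φ : Type*) (a : Φ → A)
    (𝔥 : Ideal (MvPolynomial Φ A))
    (h𝔥 : 𝔥 = Ideal.span (Set.range fun α => MvPolynomial.X α - MvPolynomial.C (a α)))
    (s : ℕ) :
    Module.Projective A ↥(𝔥 ^ s) := by
  subst h𝔥
  have := ideal_pow_projective_general a s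
  infer_instance
end

section
/- Let A be a commutative ring, n ≥ 0 an integer, and C a chain complex of A-modules with C_i = 0 for i < 0 such that C_i is a flat A-module for every i ≥ 0 and H_j(C) = 0 for every j ≤ n. Then for every A-module M and every integer k ≤ n, H_k(C ⊗_A M) = 0, where C ⊗_A M is the chain complex with (C ⊗_A M)_i = C_i ⊗_A M and differentials ∂_i ⊗ id_M. -/
/-!
Exactness cuts the complex into short exact sequences `0 → Bᵢ → Cᵢ → Bᵢ₋₁ → 0`, where `Bᵢ` is the
image of `Cᵢ₊₁` in `Cᵢ`. The kernel of a surjection between flat modules is flat, so, starting from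
`Bᵢ = 0` in negative degrees, every `Bᵢ` whose terms `Cⱼ`, `j ≤ i`, are flat is itself flat. As
`Bₖ₋₂` is flat, `Bₖ₋₁ ⊗ M → Cₖ₋₁ ⊗ M` is injective, and the right exact sequence
`Cₖ₊₁ ⊗ M → Cₖ ⊗ M → Bₖ₋₁ ⊗ M → 0` then computes the kernel of `Cₖ ⊗ M → Cₖ₋₁ ⊗ M`.
-/

open LinearMap Function

section Modules

variable {R L N P Q : Type*} [CommRing R] [AddCommGroup L] [Module R L]
  [AddCommGroup N] [Module R N] [AddCommGroup P] [Module R P] [AddCommGroup Q] [Module R Q]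

theorem flat_of_injective_of_exact_of_surjective {f : N →ₗ[R] P} {g : P →ₗ[R] Q}
    (hf : Injective f) (hfg : Exact f g) (hg : Surjective g) [Module.Flat R P] [Module.Flat R Q] :
    Module.Flat R N := by
  rw [Module.Flat.iff_lTensor_preserves_injective_linearMap]
  intro X Y _ _ _ _ u hu
  have hfX : Injective (f.lTensor X) := lTensor_injective_of_exact_of_flat g hg f hf hfg X
  have huP : Injective (u.rTensor P) := Module.Flat.rTensor_preserves_injective_linearMap u hu
  have hcomm : f.lTensor Y ∘ₗ u.rTensor N = u.rTensor P ∘ₗ f.lTensor X := by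
    rw [lTensor_comp_rTensor, rTensor_comp_lTensor]
  have huN : Injective (f.lTensor Y ∘ₗ u.rTensor N) := by
    rw [hcomm]
    exact huP.comp hfX
  exact (lTensor_inj_iff_rTensor_inj N u).mpr (Injective.of_comp huN)

theorem flat_range_of_exact {f : N →ₗ[R] P} {g : P →ₗ[R] Q} (hfg : Exact f g)
    [Module.Flat R P] [Module.Flat R (range g)] : Module.Flat R (range f) :=
  flat_of_injective_of_exact_of_surjective (range f).subtype_injective
    hfg.linearMap_rangeRestrict g.surjective_rangeRestrict

theorem rTensor_subtype_range_injective_of_exact {f : N →ₗ[R] P} {g : P →ₗ[R] Q}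
    (hfg : Exact f g) [Module.Flat R (range g)] (M : Type*) [AddCommGroup M] [Module R M] :
    Injective ((range f).subtype.rTensor M) :=
  (lTensor_inj_iff_rTensor_inj M _).mp <|
    lTensor_injective_of_exact_of_flat g.rangeRestrict g.surjective_rangeRestrict _
      (range f).subtype_injective hfg.linearMap_rangeRestrict M

theorem rTensor_exact_of_exact_of_flat_range {f : L →ₗ[R] N} {g : N →ₗ[R] P} {h : P →ₗ[R] Q}
    (hfg : Exact f g) (hgh : Exact g h) [Module.Flat R (range h)]
    (M : Type*) [AddCommGroup M] [Module R M] : Exact (f.rTensor M) (g.rTensor M) := by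
  have hcorestrict : Exact f g.rangeRestrict :=
    (range g).subtype_injective.comp_exact_iff_exact.mp hfg
  have hfactor : g.rTensor M = (range g).subtype.rTensor M ∘ₗ g.rangeRestrict.rTensor M := by
    rw [← rTensor_comp, subtype_comp_codRestrict]
  rw [hfactor, (rTensor_subtype_range_injective_of_exact hgh M).comp_exact_iff_exact]
  exact rTensor_exact M hcorestrict g.surjective_rangeRestrict

end Modules

section Sequences

variable {A : Type*} [CommRing A] {C : ℤ → Type*} [∀ i, AddCommGroup (C i)] [∀ i, Module A (C i)]
  {d : ∀ i j : ℤ, C i →ₗ[A] C j}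

theorem flat_range_of_bounded_below_of_exact {b m : ℤ} (hbdd : ∀ i < b, Subsingleton (C i))
    (hflat : ∀ i, b ≤ i → i ≤ m → Module.Flat A (C i))
    (hexact : ∀ i ≤ m, Exact (d (i + 1) i) (d i (i - 1))) :
    Module.Flat A (range (d (m + 1) m)) := by
  obtain hmb | hbm := lt_or_ge m b
  · have := hbdd m hmb
    infer_instance
  induction m, hbm using Int.leInduction with
  | base =>
    have := hbdd (b - 1) (sub_one_lt b)
    have := hflat b le_rfl le_rfl
    exact flat_range_of_exact (hexact b le_rfl)
  | succ m hbm ih =>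
    have := hflat (m + 1) (by lia) le_rfl
    have := ih (fun i hbi him ↦ hflat i hbi (by lia)) (fun i him ↦ hexact i (by lia))
    have hexact_succ := hexact (m + 1) le_rfl
    rw [add_sub_cancel_right] at hexact_succ
    exact flat_range_of_exact hexact_succ

theorem homology_tensor_vanish_of_flat_of_acyclic_general {b k : ℤ}
    (hbdd : ∀ i < b, Subsingleton (C i))
    (hflat : ∀ i, b ≤ i → i + 2 ≤ k → Module.Flat A (C i))
    (hexact : ∀ i ≤ k, Exact (d (i + 1) i) (d i (i - 1)))
    (M : Type*) [AddCommGroup M] [Module A M] :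
    Exact ((d (k + 1) k).rTensor M) ((d k (k - 1)).rTensor M) := by
  have hflat_range : Module.Flat A (range (d (k - 2 + 1) (k - 2))) :=
    flat_range_of_bounded_below_of_exact hbdd (fun i hbi hik ↦ hflat i hbi (by lia))
      (fun i hik ↦ hexact i (by lia))
  have hexact_pred := hexact (k - 1) (by lia)
  rw [show k - 2 + 1 = k - 1 by ring] at hflat_range
  rw [sub_add_cancel, show k - 1 - 1 = k - 2 by ring] at hexact_pred
  exact rTensor_exact_of_exact_of_flat_range (hexact k le_rfl) hexact_pred M

end Sequences

/-- Let `A` be a commutative ring, `n ≥ 0`, and `C` a chain complex of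
`A`-modules concentrated in nonnegative degrees (`C_i = 0` for `i < 0`), with flat terms and
`H_j(C) = 0` for every `j ≤ n`.  Then for every `A`-module `M` and every `k ≤ n`,
`H_k(C ⊗_A M) = 0`, where `C ⊗_A M` has terms `C_i ⊗_A M` and differentials `∂ᵢ ⊗ id`.

The complex is encoded as a family of modules `C i` (`i : ℤ`) together with maps
`d i j : C i →ₗ[A] C j` which vanish unless `j = i - 1` and compose to zero (the convention of
homological complexes); `H_j = 0` is expressed as `ker ∂_j = range ∂_{j+1}`. -/
theorem homology_tensor_vanish_of_flat_of_acyclic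
    (A : Type*) [CommRing A] (n : ℤ) (hn : 0 ≤ n)
    (C : ℤ → Type*) [∀ i, AddCommGroup (C i)] [∀ i, Module A (C i)]
    (d : ∀ i j : ℤ, C i →ₗ[A] C j)
    (hshape : ∀ i j : ℤ, j ≠ i - 1 → d i j = 0)
    (hdd : ∀ i j k : ℤ, ∀ x : C i, d j k (d i j x) = 0)
    (hconn : ∀ i : ℤ, i < 0 → Subsingleton (C i))
    (hflat : ∀ i : ℤ, 0 ≤ i → Module.Flat A (C i))
    (hacyclic : ∀ j : ℤ, j ≤ n →
      LinearMap.ker (d j (j - 1)) = LinearMap.range (d (j + 1) j))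
    (M : Type*) [AddCommGroup M] [Module A M] (k : ℤ) (hk : k ≤ n) :
    LinearMap.ker (LinearMap.rTensor M (d k (k - 1)))
      = LinearMap.range (LinearMap.rTensor M (d (k + 1) k)) :=
  exact_iff.mp <| homology_tensor_vanish_of_flat_of_acyclic_general hconn (fun i hi _ ↦ hflat i hi)
    (fun i hik ↦ exact_iff.mpr (hacyclic i (hik.trans hk))) M
end

section
/- Let A be a commutative ring, n ≥ 0 an integer, and C a chain complex of A-modules with C_i = 0 for i < 0 such that C_i is a projective A-module for every i ≥ 0 and H_j(C) = 0 for every j ≤ n. Then for every A-module M, the complex Hom_A(C, M) is exact in all degrees −k with k ≤ n; that is, Ker(Hom_A(∂_{k+1}, M)) = Im(Hom_A(∂_k, M)) as submodules of Hom_A(C_k, M) for every 0 ≤ k ≤ n. -/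
/-! In each degree, a linear map `s` with `∂ ∘ s ∘ ∂ = ∂` is built by induction from the bottom of
the complex: if `s` serves for `∂_j`, then `1 - s ∘ ∂_j` takes values in `Ker ∂_j = Im ∂_{j+1}`, so
projectivity of `C_j` lifts it through `∂_{j+1}`, and the lift serves for `∂_{j+1}`.
If moreover `φ : C_k → M` kills `Im ∂_{k+1} = Ker ∂_k`, then it kills the image of `1 - s ∘ ∂_k`,
that is, `φ = (φ ∘ s) ∘ ∂_k`. -/

section ExactSequence

variable {A L P Q : Type*} [Ring A] [AddCommGroup L] [Module A L] [AddCommGroup P] [Module A P]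
  [AddCommGroup Q] [Module A Q] {f : L →ₗ[A] P} {g : P →ₗ[A] Q}

theorem exists_comp_eq_of_exact_of_projective {N : Type*} [AddCommGroup N] [Module A N]
    [Module.Projective A N] (hfg : Function.Exact f g) {h : N →ₗ[A] P} (hgh : g ∘ₗ h = 0) :
    ∃ r : N →ₗ[A] L, f ∘ₗ r = h := by
  have h_mem_range (x : N) : h x ∈ LinearMap.range f := (hfg (h x)).mp (LinearMap.congr_fun hgh x)
  obtain ⟨r, hr⟩ := Module.projective_lifting_property f.rangeRestrict
    (h.codRestrict (LinearMap.range f) h_mem_range) f.surjective_rangeRestrict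
  exact ⟨r, LinearMap.ext fun x => congrArg Subtype.val (LinearMap.congr_fun hr x)⟩

/-- A linear map has a generalized inverse (is von Neumann regular) if `g ∘ s ∘ g = g` for some
linear `s` in the opposite direction. Equivalently, its kernel and its range are direct summands;
the equational form is the one that is carried along a complex and preserved by `Hom(-, M)`. -/
def HasGeneralizedInverse (g : P →ₗ[A] Q) : Prop :=
  ∃ s : Q →ₗ[A] P, g ∘ₗ s ∘ₗ g = g

namespace HasGeneralizedInverse

theorem of_exact_of_projective [Module.Projective A P] (hg : HasGeneralizedInverse g)
    (hfg : Function.Exact f g) : HasGeneralizedInverse f := by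
  obtain ⟨s, hs⟩ := hg
  have hg_compl : g ∘ₗ (LinearMap.id - s ∘ₗ g) = 0 := by
    rw [LinearMap.comp_sub, LinearMap.comp_id, hs, sub_self]
  obtain ⟨r, hr⟩ := exists_comp_eq_of_exact_of_projective hfg hg_compl
  refine ⟨r, ?_⟩
  calc f ∘ₗ r ∘ₗ f = (LinearMap.id - s ∘ₗ g) ∘ₗ f := by rw [← hr, LinearMap.comp_assoc]
    _ = f - s ∘ₗ g ∘ₗ f := by rw [LinearMap.sub_comp, LinearMap.id_comp, LinearMap.comp_assoc]
    _ = f := by rw [hfg.linearMap_comp_eq_zero, LinearMap.comp_zero, sub_zero]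

theorem exact_lcomp (hg : HasGeneralizedInverse g) (hfg : Function.Exact f g)
    (S M : Type*) [Semiring S] [AddCommGroup M] [Module A M] [Module S M] [SMulCommClass A S M] :
    Function.Exact (LinearMap.lcomp S M g) (LinearMap.lcomp S M f) := by
  obtain ⟨s, hs⟩ := hg
  refine fun φ => ⟨fun hφ => ⟨φ ∘ₗ s, LinearMap.ext fun x => ?_⟩, ?_⟩
  · have hx : g (x - s (g x)) = 0 := by
      rw [map_sub, sub_eq_zero]
      exact (LinearMap.congr_fun hs x).symm
    obtain ⟨y, hy⟩ := (hfg _).mp hx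
    have hφx : φ (x - s (g x)) = 0 := hy ▸ LinearMap.congr_fun hφ y
    rw [map_sub, sub_eq_zero] at hφx
    exact hφx.symm
  · rintro ⟨ψ, rfl⟩
    simp only [LinearMap.lcomp_apply', LinearMap.comp_assoc, hfg.linearMap_comp_eq_zero,
      LinearMap.comp_zero]

end HasGeneralizedInverse

end ExactSequence

section Complex

variable {A : Type*} [Ring A] {C : ℤ → Type*} [∀ i, AddCommGroup (C i)] [∀ i, Module A (C i)]
  {d : ∀ i j : ℤ, C i →ₗ[A] C j} {a k : ℤ}

theorem hasGeneralizedInverse_differential (hak : a ≤ k)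
    (ha : HasGeneralizedInverse (d a (a - 1)))
    (hproj : ∀ i, a ≤ i → i < k → Module.Projective A (C i))
    (hexact : ∀ i, a ≤ i → i < k → Function.Exact (d (i + 1) i) (d i (i - 1))) :
    HasGeneralizedInverse (d k (k - 1)) := by
  induction k, hak using Int.leInduction with
  | base => exact ha
  | succ k hak ih =>
    have hk : HasGeneralizedInverse (d k (k - 1)) :=
      ih (fun i hai hik => hproj i hai (by lia)) (fun i hai hik => hexact i hai (by lia))
    have : Module.Projective A (C k) := hproj k hak (lt_add_one k)
    rw [add_sub_cancel_right]
    exact hk.of_exact_of_projective (hexact k hak (lt_add_one k))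

theorem hom_complex_exact_of_projective_of_acyclic_general (hak : a ≤ k)
    (ha : HasGeneralizedInverse (d a (a - 1)))
    (hproj : ∀ i, a ≤ i → i < k → Module.Projective A (C i))
    (hexact : ∀ i, a ≤ i → i ≤ k → Function.Exact (d (i + 1) i) (d i (i - 1)))
    (S M : Type*) [Semiring S] [AddCommGroup M] [Module A M] [Module S M] [SMulCommClass A S M] :
    Function.Exact (LinearMap.lcomp S M (d k (k - 1))) (LinearMap.lcomp S M (d (k + 1) k)) :=
  (hasGeneralizedInverse_differential hak ha hproj fun i hai hik => hexact i hai hik.le).exact_lcomp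
    (hexact k hak le_rfl) S M

end Complex

/-- Let `A` be a commutative ring, `n ≥ 0`, and `C` a chain complex of
`A`-modules concentrated in nonnegative degrees, with projective terms and `H_j(C) = 0` for
every `j ≤ n`.  Then for every `A`-module `M`, the complex `Hom_A(C, M)` is exact in degrees
`−k` for `0 ≤ k ≤ n`: `Ker(Hom_A(∂_{k+1}, M)) = Im(Hom_A(∂_k, M))` inside `Hom_A(C_k, M)`.

The complex is encoded as a family of modules `C i` (`i : ℤ`) together with maps
`d i j : C i →ₗ[A] C j` which vanish unless `j = i - 1` and compose to zero; `Hom_A(∂, M)` is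
precomposition `LinearMap.lcomp`. -/
theorem hom_complex_exact_of_projective_of_acyclic
    (A : Type*) [CommRing A] (n : ℤ) (hn : 0 ≤ n)
    (C : ℤ → Type*) [∀ i, AddCommGroup (C i)] [∀ i, Module A (C i)]
    (d : ∀ i j : ℤ, C i →ₗ[A] C j)
    (hshape : ∀ i j : ℤ, j ≠ i - 1 → d i j = 0)
    (hdd : ∀ i j k : ℤ, ∀ x : C i, d j k (d i j x) = 0)
    (hconn : ∀ i : ℤ, i < 0 → Subsingleton (C i))
    (hproj : ∀ i : ℤ, 0 ≤ i → Module.Projective A (C i))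
    (hacyclic : ∀ j : ℤ, j ≤ n →
      LinearMap.ker (d j (j - 1)) = LinearMap.range (d (j + 1) j))
    (M : Type*) [AddCommGroup M] [Module A M] (k : ℤ) (hk0 : 0 ≤ k) (hk : k ≤ n) :
    LinearMap.ker (LinearMap.lcomp A M (d (k + 1) k))
      = LinearMap.range (LinearMap.lcomp A M (d k (k - 1))) := by
  have : Subsingleton (C (0 - 1)) := hconn (0 - 1) (by lia)
  exact (hom_complex_exact_of_projective_of_acyclic_general hk0 ⟨0, Subsingleton.elim _ _⟩
    (fun i hi _ => hproj i hi) (fun i _ hik => LinearMap.exact_iff.mpr (hacyclic i (hik.trans hk)))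
    A M).linearMap_ker_eq
end
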